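/- arXiv:math/0302017 — 3 statements merged into one kernel-verified Lean document; each statement's English description precedes it below -/
import Mathlib

section
/- Let p be a prime, let R be a commutative Noetherian local pro-p domain, and let S be the integral closure of R in its fraction field. Then S is a local ring, S is finitely generated as an R-module (in particular S is a Noetherian ring), and the Krull dimension of S equals the Krull dimension of R. -/
set_option synthInstance.maxHeartbeats 400000

/-!
A complete Noetherian local domain `R` with finite residue field of characteristic `p` is a finite
extension of a power series ring `A` over `𝔽_p` or `ℤ_p`: choose elements of the maximal ideal that
form a system of parameters of `R`, respectively of `R ⧸ p R`, and evaluate power series at them.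
The resulting map is finite by completeness, and injective because a proper quotient of `A` has
smaller dimension than `R`. Since `A` is integrally closed and has finite Frobenius when it has
positive characteristic, its integral closure in any finite extension of its fraction field is a
finite `A`-module: the trace form settles the separable case, and a power of Frobenius reduces to
it. Hence the integral closure `S` of `R` is finite over `R`, so it is complete for the topology of
`maximalIdeal R` and its dimension is that of `R`. Idempotents of the Artinian ring `S ⧸
(maximalIdeal R) S` lift to the domain `S` by Hensel's lemma, so there are only the trivial ones,
and `S` is local.
-/

open IsLocalRing PowerSeries
open scoped nonZeroDivisors

section PowerSeries

variable {A : Type*} [CommRing A]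

theorem mem_comap_constantCoeff_pow_iff (I : Ideal A) (n : ℕ) (f : A⟦X⟧) :
    f ∈ I.comap constantCoeff ^ n ↔ ∀ i, coeff i f ∈ I ^ (n - i) := by
  have X_mem : (X : A⟦X⟧) ∈ I.comap constantCoeff := by simp
  have map_C_le : I.map C ≤ I.comap (constantCoeff (R := A)) :=
    Ideal.map_le_iff_le_comap.mpr fun a ha ↦ by simpa using ha
  constructor
  · induction n generalizing f with
    | zero => simp
    | succ n ih =>
      intro hf
      rw [pow_succ] at hf
      refine Submodule.mul_induction_on hf (fun g hg h hh i ↦ ?_) fun g h hg hh i ↦ ?_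
      · rw [coeff_mul]
        refine Ideal.sum_mem _ fun ⟨j, k⟩ hjk ↦ ?_
        obtain rfl : j + k = i := by simpa using hjk
        rcases Nat.eq_zero_or_pos k with rfl | hk
        · have := Ideal.mul_mem_mul (ih g hg j) (show coeff 0 h ∈ I by simpa using hh)
          rw [← pow_succ] at this
          exact Ideal.pow_le_pow_right (by lia) this
        · exact Ideal.pow_le_pow_right (by lia) (Ideal.mul_mem_right _ _ (ih g hg j))
      · rw [map_add]
        exact add_mem (hg i) (hh i)
  · induction n generalizing f with
    | zero => simp
    | succ n ih =>
      intro hf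
      rw [eq_X_mul_shift_add_const f]
      refine add_mem ?_ ?_
      · rw [pow_succ']
        refine Ideal.mul_mem_mul X_mem (ih _ fun i ↦ ?_)
        simpa [coeff_mk, Nat.add_sub_add_right] using hf (i + 1)
      · refine Ideal.pow_right_mono map_C_le (n + 1) ?_
        rw [← Ideal.map_pow]
        exact Ideal.mem_map_of_mem C (by simpa using hf 0)

theorem isAdicComplete_comap_constantCoeff (I : Ideal A) [IsAdicComplete I A] :
    IsAdicComplete (I.comap constantCoeff) A⟦X⟧ where
  haus' f hf := by
    ext i
    refine IsHausdorff.haus (I := I) inferInstance _ fun n ↦ ?_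
    have := hf (n + i)
    rw [SModEq.zero, smul_eq_mul, Ideal.mul_top] at this ⊢
    simpa using (mem_comap_constantCoeff_pow_iff I _ f).mp this i
  prec' f hf := by
    have coeff_cauchy (i : ℕ) {m n : ℕ} (hmn : m ≤ n) :
        coeff i (f (m + i)) ≡ coeff i (f (n + i)) [SMOD (I ^ m • ⊤ : Submodule A A)] := by
      have := hf (Nat.add_le_add_right hmn i)
      rw [SModEq.sub_mem, smul_eq_mul, Ideal.mul_top] at this ⊢
      simpa using (mem_comap_constantCoeff_pow_iff I _ _).mp this i
    choose L hL using fun i ↦ IsPrecomplete.prec' (I := I) _ (coeff_cauchy i)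
    refine ⟨mk L, fun n ↦ ?_⟩
    rw [SModEq.sub_mem, smul_eq_mul, Ideal.mul_top, mem_comap_constantCoeff_pow_iff]
    intro i
    rcases le_total i n with hi | hi
    · have := hL i (n - i)
      rw [SModEq.sub_mem, smul_eq_mul, Ideal.mul_top, Nat.sub_add_cancel hi] at this
      simpa using this
    · simp [Nat.sub_eq_zero_of_le hi]

theorem ker_constantCoeff_eq_span_X : RingHom.ker (constantCoeff (R := A)) = Ideal.span {X} := by
  ext f
  rw [RingHom.mem_ker, Ideal.mem_span_singleton, X_dvd_iff]

theorem constantCoeff_surjective : Function.Surjective (constantCoeff (R := A)) :=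
  fun a ↦ ⟨C a, constantCoeff_C a⟩

theorem ringKrullDim_powerSeries [IsNoetherianRing A] :
    ringKrullDim A⟦X⟧ = ringKrullDim A + 1 := by
  refine le_antisymm ?_ ringKrullDim_succ_le_ringKrullDim_powerseries
  have X_mem_jacobson : (X : A⟦X⟧) ∈ Ring.jacobson A⟦X⟧ := by
    rw [← Ideal.jacobson_bot, Ideal.mem_jacobson_bot]
    exact fun f ↦ isUnit_iff_constantCoeff.mpr (by simp)
  let quotientEquiv : (A⟦X⟧ ⧸ Ideal.span {(X : A⟦X⟧)}) ≃+* A :=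
    (Ideal.quotEquivOfEq ker_constantCoeff_eq_span_X.symm).trans
      (RingHom.quotientKerEquivOfSurjective constantCoeff_surjective)
  have := ringKrullDim_le_ringKrullDim_quotient_add_card ({X} : Finset A⟦X⟧)
    (by simpa using X_mem_jacobson)
  rwa [Finset.coe_singleton, ringKrullDim_eq_of_ringEquiv quotientEquiv, Finset.card_singleton,
    Nat.cast_one] at this

instance isLocalHom_constantCoeff : IsLocalHom (constantCoeff (R := A)) :=
  ⟨fun _ ↦ isUnit_iff_constantCoeff.mpr⟩

theorem maximalIdeal_powerSeries_eq_comap [IsLocalRing A] :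
    maximalIdeal A⟦X⟧ = (maximalIdeal A).comap constantCoeff :=
  (maximalIdeal_comap (constantCoeff (R := A))).symm

end PowerSeries

section IntegrallyClosed

variable {A S : Type*} [CommRing A] [CommRing S] [Algebra A S]

theorem isAlmostIntegral_of_X_mul {f : S⟦X⟧} (hf : IsAlmostIntegral A⟦X⟧ (X * f)) :
    IsAlmostIntegral A⟦X⟧ f := by
  obtain ⟨c, hc, hcf⟩ := hf
  refine ⟨c, hc, fun n ↦ ?_⟩
  obtain ⟨g, hg⟩ := hcf n
  refine ⟨mk fun i ↦ coeff (i + n) g, ?_⟩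
  ext i
  have := congrArg (coeff (i + n)) hg
  rw [mul_pow, Algebra.smul_def, mul_left_comm, coeff_X_pow_mul] at this
  simpa [algebraMap_apply'', Algebra.smul_def] using this

variable [IsDomain A]

theorem isAlmostIntegral_constantCoeff {f : S⟦X⟧} (hf : IsAlmostIntegral A⟦X⟧ f) :
    IsAlmostIntegral A (constantCoeff f) := by
  obtain ⟨c, hc, hcf⟩ := hf
  have hc₀ : c ≠ 0 := nonZeroDivisors.ne_zero hc
  obtain ⟨c', hc'⟩ := X_pow_order_dvd (φ := c)
  refine ⟨coeff c.order.toNat c, mem_nonZeroDivisors_of_ne_zero (coeff_order hc₀), fun n ↦ ?_⟩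
  obtain ⟨g, hg⟩ := hcf n
  refine ⟨coeff c.order.toNat g, ?_⟩
  -- Writing `c = X ^ k * c'`, the coefficient of `X ^ k` in `c * f ^ n` is `c'(0) * f(0) ^ n`.
  generalize c.order.toNat = k at hc'
  subst hc'
  have := congrArg (coeff k) hg
  have constantCoeff_map : constantCoeff (map (algebraMap A S) c') =
      algebraMap A S (constantCoeff c') := by
    rw [← coeff_zero_eq_constantCoeff_apply, coeff_map, coeff_zero_eq_constantCoeff_apply]
  simpa [algebraMap_apply'', Algebra.smul_def, mul_assoc, coeff_X_pow_mul', constantCoeff_map]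
    using this

theorem isAlmostIntegral_C {a : S} (ha : IsAlmostIntegral A a) :
    IsAlmostIntegral A⟦X⟧ (C a : S⟦X⟧) := by
  obtain ⟨r, hr, hra⟩ := ha
  have hr₀ : r ≠ 0 := nonZeroDivisors.ne_zero hr
  refine ⟨C r, mem_nonZeroDivisors_of_ne_zero ((map_ne_zero_iff C C_injective).mpr hr₀), fun n ↦ ?_⟩
  obtain ⟨s, hs⟩ := hra n
  exact ⟨C s, by simp [algebraMap_apply'', Algebra.smul_def, hs]⟩

theorem isAlmostIntegral_coeff {f : S⟦X⟧} (hf : IsAlmostIntegral A⟦X⟧ f) (i : ℕ) :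
    IsAlmostIntegral A (coeff i f) := by
  induction i generalizing f with
  | zero => simpa using isAlmostIntegral_constantCoeff hf
  | succ i ih =>
    have h_sub : IsAlmostIntegral A⟦X⟧ (f - C (constantCoeff f)) :=
      (completeIntegralClosure A⟦X⟧ S⟦X⟧).sub_mem hf
        (isAlmostIntegral_C (isAlmostIntegral_constantCoeff hf))
    rw [sub_const_eq_X_mul_shift] at h_sub
    simpa using ih (isAlmostIntegral_of_X_mul h_sub)

/-- A power series over the fraction field `K` of `A` which is integral over `A⟦X⟧` is almost
integral, hence so are its coefficients; and `K⟦X⟧` is a discrete valuation ring. -/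
instance isIntegrallyClosed_powerSeries [IsNoetherianRing A] [IsIntegrallyClosed A] :
    IsIntegrallyClosed A⟦X⟧ := by
  let K := FractionRing A
  have map_injective : Function.Injective (map (algebraMap A K)) :=
    map_injective _ (IsFractionRing.injective A K)
  let φ : FractionRing A⟦X⟧ →+* FractionRing K⟦X⟧ := IsFractionRing.map map_injective
  have φ_algebraMap (g : A⟦X⟧) : φ (algebraMap _ _ g) = algebraMap _ _ (map (algebraMap A K) g) :=
    IsLocalization.map_eq _ g
  refine (isIntegrallyClosed_iff (FractionRing A⟦X⟧)).mpr fun {z} hz ↦ ?_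
  obtain ⟨f, hf⟩ : ∃ f : K⟦X⟧, algebraMap _ _ f = φ z :=
    IsIntegrallyClosed.isIntegral_iff.mp
      (hz.map_of_comp_eq (map (algebraMap A K)) φ (RingHom.ext φ_algebraMap).symm)
  have f_almostIntegral : IsAlmostIntegral A⟦X⟧ f := by
    obtain ⟨c, hc, hcz⟩ := hz.isAlmostIntegral
    refine ⟨c, hc, fun n ↦ ?_⟩
    obtain ⟨d, hd⟩ := hcz n
    refine ⟨d, IsFractionRing.injective K⟦X⟧ (FractionRing K⟦X⟧) ?_⟩
    rw [algebraMap_apply'', ← φ_algebraMap, hd, Algebra.smul_def, Algebra.smul_def, map_mul,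
      map_mul, map_pow, map_pow, hf, φ_algebraMap, algebraMap_apply'']
  choose g hg using fun i ↦
    IsIntegrallyClosed.isIntegral_iff.mp (isAlmostIntegral_coeff f_almostIntegral i).isIntegral
  refine ⟨mk g, φ.injective ?_⟩
  rw [φ_algebraMap, ← hf]
  congr 1
  ext i
  simpa using hg i

end IntegrallyClosed

theorem exists_ringHom_powerSeries_eval {A R : Type*} [CommRing A] [CommRing R] (I : Ideal R)
    [IsAdicComplete I R] (φ : A →+* R) {y : R} (hy : y ∈ I) :
    ∃ Φ : A⟦X⟧ →+* R, Φ X = y ∧ ∀ a, Φ (C a) = φ a := by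
  let _ : WithIdeal A := ⟨⊥⟩
  let _ : WithIdeal R := ⟨I⟩
  obtain ⟨_, _⟩ : CompleteSpace R ∧ T2Space R :=
    (show IsAdic I from rfl).isAdicComplete_iff.mp inferInstance
  have map_bot_le : (⊥ : Ideal A).map φ ≤ I := by simp only [Ideal.map_bot, bot_le]
  have hφ : Continuous φ := (WithIdeal.uniformContinuous_of_map_le map_bot_le).continuous
  have hy : HasEval y := WithIdeal.isTopologicallyNilpotent_of_mem hy
  refine ⟨eval₂Hom hφ hy, ?_, fun a ↦ ?_⟩
  · rw [coe_eval₂Hom, eval₂_X]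
  · rw [coe_eval₂Hom, eval₂_C]

section AdicFiniteness

theorem isPrecomplete_of_finite {A : Type*} (M : Type*) [CommRing A] [AddCommGroup M] [Module A M]
    (I : Ideal A) [IsPrecomplete I A] [Module.Finite A M] : IsPrecomplete I M := by
  refine AdicCompletion.of_surjective_iff.mp fun x ↦ ?_
  obtain ⟨t, rfl⟩ := AdicCompletion.ofTensorProduct_surjective_of_finite I M x
  induction t with
  | zero => exact ⟨0, by simp⟩
  | tmul r m =>
    obtain ⟨a, rfl⟩ := AdicCompletion.of_surjective I A r
    exact ⟨a • m, by ext n; rfl⟩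
  | add s t hs ht =>
    obtain ⟨x, hx⟩ := hs
    obtain ⟨y, hy⟩ := ht
    exact ⟨x + y, by simp [hx, hy]⟩

theorem moduleFinite_of_finite_quotient_smul_top {A M : Type*} [CommRing A] [AddCommGroup M]
    [Module A M] (I : Ideal A) [IsPrecomplete I A] [IsHausdorff I M]
    [Module.Finite A (M ⧸ (I • ⊤ : Submodule A M))] : Module.Finite A M := by
  obtain ⟨k, g, hg⟩ := Module.Finite.exists_fin' A (M ⧸ (I • ⊤ : Submodule A M))
  obtain ⟨f, rfl⟩ :=
    Module.projective_lifting_property (I • ⊤ : Submodule A M).mkQ g (Submodule.mkQ_surjective _)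
  have := isPrecomplete_of_finite (Fin k → A) I
  exact Module.Finite.of_surjective f (surjective_of_mkQ_comp_surjective (I := I) hg)

theorem ringHom_finite_of_pow_maximalIdeal_le_map {A R : Type*} [CommRing A] [IsLocalRing A]
    [IsPrecomplete (maximalIdeal A) A] [CommRing R] [IsNoetherianRing R] [IsLocalRing R]
    [Finite (ResidueField R)] (f : A →+* R) [IsLocalHom f] {n : ℕ}
    (h : maximalIdeal R ^ n ≤ (maximalIdeal A).map f) : f.Finite := by
  algebraize [f]
  change Module.Finite A R
  have : IsHausdorff (maximalIdeal A) R :=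
    IsHausdorff.map_algebraMap_iff.mp
      (IsHausdorff.of_isLocalRing _ R (map_maximalIdeal_lt_top f).ne)
  have : Finite (R ⧸ maximalIdeal R) := ‹Finite (ResidueField R)›
  have : Finite (R ⧸ maximalIdeal R ^ n) :=
    Ideal.finite_quotient_pow (IsNoetherian.noetherian (maximalIdeal R)) n
  have : Finite (R ⧸ (maximalIdeal A).map f) :=
    Finite.of_surjective _ (Ideal.Quotient.factor_surjective h)
  have : Finite (R ⧸ (maximalIdeal A • ⊤ : Submodule A R)) := by
    rw [Ideal.smul_top_eq_map]
    exact this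
  exact moduleFinite_of_finite_quotient_smul_top (maximalIdeal A)

theorem frobenius_finite {A : Type*} [CommRing A] [IsNoetherianRing A] [IsLocalRing A]
    [IsPrecomplete (maximalIdeal A) A] [Finite (ResidueField A)] (p : ℕ) [ExpChar A p] :
    (frobenius A p).Finite := by
  have : IsLocalHom (frobenius A p) := ⟨fun a ha ↦ (isUnit_pow_iff (expChar_ne_zero A p)).mp ha⟩
  have le_radical : maximalIdeal A ≤ ((maximalIdeal A).map (frobenius A p)).radical :=
    fun a ha ↦ ⟨p, Ideal.mem_map_of_mem (frobenius A p) ha⟩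
  obtain ⟨n, hn⟩ :=
    Ideal.exists_pow_le_of_le_radical_of_fg le_radical (IsNoetherian.noetherian _)
  exact ringHom_finite_of_pow_maximalIdeal_le_map _ hn

end AdicFiniteness

section Integral

theorem ringKrullDim_le_of_isIntegral {A B : Type*} [CommRing A] [CommRing B] {f : A →+* B}
    (hf : f.IsIntegral) : ringKrullDim B ≤ ringKrullDim A := by
  algebraize [f]
  exact Order.krullDim_le_of_strictMono (PrimeSpectrum.comap (algebraMap A B))
    fun _ _ ↦ Ideal.IsIntegral.comap_lt_comap

theorem ringKrullDim_eq_of_isIntegral_of_isDomain (A B : Type*) [CommRing A] [CommRing B]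
    [IsDomain B] [Algebra A B] [FaithfulSMul A B] [Algebra.IsIntegral A B] :
    ringKrullDim B = ringKrullDim A := by
  refine (ringKrullDim_le_of_isIntegral (algebraMap_isIntegral_iff.mpr inferInstance)).antisymm
    (iSup_le fun chain ↦ ?_)
  have ker_le : RingHom.ker (algebraMap A B) ≤ chain.head.asIdeal := by
    rw [(RingHom.injective_iff_ker_eq_bot _).mp (FaithfulSMul.algebraMap_injective A B)]
    exact bot_le
  obtain ⟨P, _, hP⟩ :=
    Ideal.exists_ideal_over_prime_of_isIntegral_of_isDomain chain.head.asIdeal ker_le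
  have : P.LiesOver chain.head.asIdeal := ⟨hP.symm⟩
  obtain ⟨lift, length_lift, -⟩ := Ideal.exists_ltSeries_of_hasGoingUp (S := B) chain P
  rw [← length_lift]
  exact le_iSup (fun l : LTSeries (PrimeSpectrum B) ↦ ((l.length : ℕ∞) : WithBot ℕ∞)) lift

theorem injective_of_isIntegral_of_ringKrullDim_le {A R : Type*} [CommRing A] [IsDomain A]
    [CommRing R] [FiniteRingKrullDim R] {f : A →+* R} (hf : f.IsIntegral)
    (h : ringKrullDim A ≤ ringKrullDim R) : Function.Injective f := by
  rw [injective_iff_map_eq_zero]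
  intro a ha
  by_contra ha₀
  have range_integral : f.range.subtype.IsIntegral :=
    RingHom.IsIntegral.tower_top f.rangeRestrict _ hf
  have succ_le : ringKrullDim R + 1 ≤ ringKrullDim R :=
    calc ringKrullDim R + 1 ≤ ringKrullDim f.range + 1 := by
          gcongr
          exact ringKrullDim_le_of_isIntegral range_integral
      _ ≤ ringKrullDim A :=
          ringKrullDim_succ_le_of_surjective f.rangeRestrict f.rangeRestrict_surjective
            (mem_nonZeroDivisors_of_ne_zero ha₀) (Subtype.ext ha)
      _ ≤ ringKrullDim R := h
  obtain ⟨d, hd⟩ : ∃ d : ℕ, ringKrullDim R = d :=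
    ⟨_, Order.krullDim_eq_length_of_finiteDimensionalOrder⟩
  rw [hd] at succ_le
  exact (ENat.WithBot.add_one_le_iff.mp succ_le).false

end Integral

section SystemOfParameters

theorem exists_finset_card_eq_ringKrullDim (Q : Type*) [CommRing Q] [IsNoetherianRing Q]
    [IsLocalRing Q] : ∃ s : Finset Q, (s.card : WithBot ℕ∞) = ringKrullDim Q ∧
      (s : Set Q) ⊆ maximalIdeal Q ∧ ∃ n, maximalIdeal Q ^ n ≤ Ideal.span (s : Set Q) := by
  obtain ⟨s, minimal, hcard⟩ :=
    Ideal.exists_finset_card_eq_height_of_isNoetherianRing (maximalIdeal Q)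
  refine ⟨s, ?_, Ideal.span_le.mp minimal.1.2, ?_⟩
  · rw [← maximalIdeal_height_eq_ringKrullDim, ← hcard]
    rfl
  · refine Ideal.exists_pow_le_of_le_radical_of_fg ?_ (IsNoetherian.noetherian _)
    rw [Ideal.radical_eq_sInf]
    exact le_sInf fun P hP ↦ minimal.2 ⟨hP.2, hP.1⟩ (le_maximalIdeal hP.2.ne_top)

theorem exists_finset_card_le_ringKrullDim_quotient {R : Type*} [CommRing R] [IsNoetherianRing R]
    [IsLocalRing R] {I : Ideal R} (hI : I ≠ ⊤) :
    ∃ s : Finset R, (s.card : WithBot ℕ∞) ≤ ringKrullDim (R ⧸ I) ∧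
      (s : Set R) ⊆ maximalIdeal R ∧ ∃ n, maximalIdeal R ^ n ≤ I ⊔ Ideal.span (s : Set R) := by
  classical
  have : Nontrivial (R ⧸ I) := Ideal.Quotient.nontrivial_iff.mpr hI
  have mk_surjective : Function.Surjective (Ideal.Quotient.mk I) := Ideal.Quotient.mk_surjective
  have : IsLocalRing (R ⧸ I) := .of_surjective' _ mk_surjective
  have : IsLocalHom (Ideal.Quotient.mk I) := .of_surjective _ mk_surjective
  obtain ⟨s, hcard, hs, n, hn⟩ := exists_finset_card_eq_ringKrullDim (R ⧸ I)
  let lift : R ⧸ I → R := Function.surjInv mk_surjective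
  have mk_lift (x : R ⧸ I) : Ideal.Quotient.mk I (lift x) = x := Function.surjInv_eq _ x
  have map_maximalIdeal : (maximalIdeal R).map (Ideal.Quotient.mk I) ≤ maximalIdeal (R ⧸ I) :=
    map_maximalIdeal_le _
  refine ⟨s.image lift, ?_, ?_, n, ?_⟩
  · rw [← hcard]
    exact_mod_cast Finset.card_image_le
  · rw [Finset.coe_image, Set.image_subset_iff]
    intro x hx
    have : Ideal.Quotient.mk I (lift x) ∈ maximalIdeal (R ⧸ I) := by
      rw [mk_lift]
      exact hs hx
    rwa [← Ideal.mem_comap, maximalIdeal_comap] at this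
  · have span_le : Ideal.span (s : Set (R ⧸ I)) ≤
        (Ideal.span (s.image lift : Set R)).map (Ideal.Quotient.mk I) := by
      rw [Ideal.map_span, Finset.coe_image, Set.image_image]
      simp only [mk_lift, Set.image_id', le_refl]
    rw [← Ideal.comap_map_quotientMk, ← Ideal.map_le_iff_le_comap, Ideal.map_pow]
    exact (Ideal.pow_right_mono map_maximalIdeal n).trans (hn.trans span_le)

end SystemOfParameters

section Normalization

universe u

/-- Integrally closed complete Noetherian local domains with finite residue field: the base
rings of the normalization `exists_finite_injective_ringHom`. The properties are bundled so that
they pass jointly from `A` to `A⟦X⟧`. -/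
class IsNormalProfiniteLocalDomain (A : Type*) [CommRing A] : Prop extends
    IsDomain A, IsNoetherianRing A, IsLocalRing A, IsIntegrallyClosed A where
  isAdicComplete : IsAdicComplete (maximalIdeal A) A
  finite_residueField : Finite (ResidueField A)

attribute [instance] IsNormalProfiniteLocalDomain.isAdicComplete
attribute [instance] IsNormalProfiniteLocalDomain.finite_residueField

instance isNormalProfiniteLocalDomain_zmod (p : ℕ) [Fact p.Prime] :
    IsNormalProfiniteLocalDomain (ZMod p) where
  isAdicComplete := by
    rw [maximalIdeal_eq_bot]
    infer_instance
  finite_residueField := .of_surjective _ residue_surjective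

instance isNormalProfiniteLocalDomain_padicInt (p : ℕ) [Fact p.Prime] :
    IsNormalProfiniteLocalDomain ℤ_[p] where
  isAdicComplete := inferInstance
  finite_residueField := .of_equiv _ PadicInt.residueField.symm.toEquiv

instance isNormalProfiniteLocalDomain_powerSeries (A : Type*) [CommRing A]
    [IsNormalProfiniteLocalDomain A] : IsNormalProfiniteLocalDomain A⟦X⟧ where
  isAdicComplete := by
    rw [maximalIdeal_powerSeries_eq_comap]
    exact isAdicComplete_comap_constantCoeff _
  finite_residueField :=
    .of_injective (ResidueField.map (constantCoeff (R := A))) (RingHom.injective _)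

theorem exists_ringHom_padicInt {p : ℕ} [Fact p.Prime] {R : Type*} [CommRing R] (I : Ideal R)
    [IsAdicComplete I R] (hp : (p : R) ∈ I) : Nonempty (ℤ_[p] →+* R) := by
  have pow_eq_zero (n : ℕ) : ((p ^ n : ℕ) : R ⧸ I ^ n) = 0 := by
    simpa using Ideal.Quotient.eq_zero_iff_mem.mpr (Ideal.pow_mem_pow hp n)
  have (n : ℕ) : Nonempty (ZMod (p ^ n) →+* R ⧸ I ^ n) := by
    obtain ⟨c, _⟩ := CharP.exists (R ⧸ I ^ n)
    exact ⟨ZMod.castHom ((CharP.cast_eq_zero_iff _ c _).mp (pow_eq_zero n)) _⟩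
  let φ (n : ℕ) : ℤ_[p] →+* R ⧸ I ^ n := (this n).some.comp (PadicInt.toZModPow n)
  refine ⟨IsAdicComplete.liftRingHom I φ fun {m n} hmn ↦ ?_⟩
  simp only [φ]
  rw [← PadicInt.zmod_cast_comp_toZModPow m n hmn, ← RingHom.comp_assoc, ← RingHom.comp_assoc]
  congr 1
  exact Subsingleton.elim _ _

theorem exists_coefficientRing (R : Type*) [CommRing R] [IsDomain R] [IsLocalRing R]
    [IsAdicComplete (maximalIdeal R) R] [Finite (ResidueField R)] :
    ∃ (A : Type) (_ : CommRing A) (_ : IsNormalProfiniteLocalDomain A) (φ : A →+* R),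
      IsLocalHom φ ∧
        ringKrullDim A + ringKrullDim (R ⧸ (maximalIdeal A).map φ) ≤ ringKrullDim R := by
  obtain ⟨p, _⟩ := CharP.exists (ResidueField R)
  have : Fact p.Prime := ⟨CharP.char_is_prime (ResidueField R) p⟩
  have hp : (p : R) ∈ maximalIdeal R := by
    rw [← residue_eq_zero_iff, map_natCast, CharP.cast_eq_zero]
  by_cases hp₀ : (p : R) = 0
  · obtain ⟨c, _⟩ := CharP.exists R
    let φ : ZMod p →+* R := ZMod.castHom ((CharP.cast_eq_zero_iff R c p).mp hp₀) R
    refine ⟨ZMod p, inferInstance, inferInstance, φ, inferInstance, ?_⟩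
    rw [ringKrullDim_eq_zero_of_field, zero_add]
    exact ringKrullDim_quotient_le _
  · obtain ⟨φ⟩ := exists_ringHom_padicInt (maximalIdeal R) hp
    have map_eq : (maximalIdeal ℤ_[p]).map φ = Ideal.span {(p : R)} := by
      rw [PadicInt.maximalIdeal_eq_span_p, Ideal.map_span, Set.image_singleton, map_natCast]
    refine ⟨ℤ_[p], inferInstance, inferInstance, φ, ?_, ?_⟩
    · rw [((local_hom_TFAE φ).out 0 2 :), map_eq]
      rwa [Ideal.span_singleton_le_iff_mem]
    · calc ringKrullDim ℤ_[p] + ringKrullDim (R ⧸ (maximalIdeal ℤ_[p]).map φ)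
          ≤ 1 + ringKrullDim (R ⧸ Ideal.span {(p : R)}) := by
            rw [map_eq]
            gcongr
            exact_mod_cast Ring.krullDimLE_iff.mp (inferInstance : Ring.KrullDimLE 1 ℤ_[p])
        _ ≤ ringKrullDim R := by
            rw [add_comm]
            exact ringKrullDim_quotient_succ_le_of_nonZeroDivisor
              (mem_nonZeroDivisors_of_ne_zero hp₀)

theorem exists_isLocalHom_powerSeries_eval {A R : Type*} [CommRing A] [CommRing R] [IsLocalRing R]
    [IsAdicComplete (maximalIdeal R) R] (φ : A →+* R) [IsLocalHom φ] {y : R}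
    (hy : y ∈ maximalIdeal R) :
    ∃ Φ : A⟦X⟧ →+* R, IsLocalHom Φ ∧ Φ X = y ∧ ∀ a, Φ (C a) = φ a := by
  obtain ⟨Φ, Φ_X, Φ_C⟩ := exists_ringHom_powerSeries_eval (maximalIdeal R) φ hy
  refine ⟨Φ, ⟨fun f hf ↦ isUnit_iff_constantCoeff.mpr (isUnit_of_map_unit φ _ ?_)⟩, Φ_X, Φ_C⟩
  rw [eq_X_mul_shift_add_const f, map_add, map_mul, Φ_X, Φ_C] at hf
  exact (IsLocalRing.isUnit_or_isUnit_of_isUnit_add hf).resolve_left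
    (mt isUnit_of_mul_isUnit_left ((mem_maximalIdeal y).mp hy))

theorem exists_isLocalHom_span_le_map_maximalIdeal {A : Type u} {R : Type*} [CommRing A]
    [IsNormalProfiniteLocalDomain A] [CommRing R] [IsLocalRing R]
    [IsAdicComplete (maximalIdeal R) R] (φ : A →+* R) [IsLocalHom φ] (s : Finset R)
    (hs : (s : Set R) ⊆ maximalIdeal R) :
    ∃ (B : Type u) (_ : CommRing B) (_ : IsNormalProfiniteLocalDomain B) (ψ : B →+* R),
      IsLocalHom ψ ∧ (maximalIdeal A).map φ ⊔ Ideal.span s ≤ (maximalIdeal B).map ψ ∧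
        ringKrullDim B = ringKrullDim A + s.card := by
  classical
  induction s using Finset.induction_on with
  | empty => exact ⟨A, inferInstance, inferInstance, φ, inferInstance, by simp, by simp⟩
  | insert y s hy ih =>
    rw [Finset.coe_insert, Set.insert_subset_iff] at hs
    obtain ⟨B, _, _, ψ, _, le_map, dim_B⟩ := ih hs.2
    obtain ⟨Ψ, hΨ, Ψ_X, Ψ_C⟩ := exists_isLocalHom_powerSeries_eval ψ hs.1
    refine ⟨B⟦X⟧, inferInstance, inferInstance, Ψ, hΨ, ?_, ?_⟩
    · have mem_map_of_constantCoeff_mem (f : B⟦X⟧) (hf : constantCoeff f ∈ maximalIdeal B) :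
          Ψ f ∈ (maximalIdeal B⟦X⟧).map Ψ :=
        Ideal.mem_map_of_mem Ψ (maximalIdeal_powerSeries_eq_comap.ge hf)
      have map_le : (maximalIdeal B).map ψ ≤ (maximalIdeal B⟦X⟧).map Ψ :=
        Ideal.map_le_iff_le_comap.mpr fun b hb ↦ by
          simpa [Ψ_C] using mem_map_of_constantCoeff_mem (C b) (by simpa using hb)
      have y_mem : y ∈ (maximalIdeal B⟦X⟧).map Ψ := by
        simpa [Ψ_X] using mem_map_of_constantCoeff_mem X (by simp)
      rw [Finset.coe_insert, Ideal.span_insert, sup_left_comm, sup_le_iff,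
        Ideal.span_singleton_le_iff_mem]
      exact ⟨y_mem, le_map.trans map_le⟩
    · rw [ringKrullDim_powerSeries, dim_B, Finset.card_insert_of_notMem hy, Nat.cast_succ,
        add_assoc]

theorem exists_finite_injective_ringHom (R : Type*) [CommRing R] [IsDomain R] [IsNoetherianRing R]
    [IsLocalRing R] [IsAdicComplete (maximalIdeal R) R] [Finite (ResidueField R)] :
    ∃ (A : Type) (_ : CommRing A) (_ : IsNormalProfiniteLocalDomain A) (φ : A →+* R),
      φ.Finite ∧ Function.Injective φ := by
  obtain ⟨A, _, _, φ, _, dim_A⟩ := exists_coefficientRing R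
  obtain ⟨s, card_s, hs, n, pow_le⟩ :=
    exists_finset_card_le_ringKrullDim_quotient (map_maximalIdeal_lt_top φ).ne
  obtain ⟨B, _, _, ψ, _, le_map, dim_B⟩ := exists_isLocalHom_span_le_map_maximalIdeal φ s hs
  have ψ_finite : ψ.Finite := ringHom_finite_of_pow_maximalIdeal_le_map ψ (pow_le.trans le_map)
  have dim_le : ringKrullDim B ≤ ringKrullDim R :=
    calc ringKrullDim B = ringKrullDim A + s.card := dim_B
      _ ≤ ringKrullDim A + ringKrullDim (R ⧸ (maximalIdeal A).map φ) := by gcongr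
      _ ≤ ringKrullDim R := dim_A
  exact ⟨B, inferInstance, inferInstance, ψ, ψ_finite,
    injective_of_isIntegral_of_ringKrullDim_le ψ_finite.to_isIntegral dim_le⟩

end Normalization

section IntegralClosure

theorem moduleFinite_of_injective_semilinearMap {A B M N : Type*} [CommRing A] [IsNoetherianRing A]
    [CommRing B] [AddCommGroup M] [Module A M] [AddCommGroup N] [Module B N] [Module.Finite B N]
    {σ : A →+* B} (hσ : σ.Finite) (g : M →ₛₗ[σ] N) (hg : Function.Injective g) :
    Module.Finite A M := by
  algebraize [σ]
  let _ : Module A N := Module.compHom N σ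
  have : IsScalarTower A B N := .of_algebraMap_smul fun _ _ ↦ rfl
  have : Module.Finite A N := .trans B N
  let g' : M →ₗ[A] N := { g with map_smul' := g.map_smul' }
  exact .of_injective g' hg

theorem iterateFrobenius_finite {A : Type*} [CommRing A] {p : ℕ} [ExpChar A p]
    (h : (frobenius A p).Finite) (n : ℕ) : (iterateFrobenius A p n).Finite := by
  induction n with
  | zero =>
    rw [iterateFrobenius_zero]
    exact .id A
  | succ n ih =>
    have : iterateFrobenius A p (n + 1) = (frobenius A p).comp (iterateFrobenius A p n) := by
      ext a
      simp only [RingHom.comp_apply, frobenius_def, iterateFrobenius_def, pow_succ, pow_mul]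
    rw [this]
    exact h.comp ih

theorem moduleFinite_integralClosure_of_isPurelyInseparable {A E L : Type*} [CommRing A]
    [IsNoetherianRing A] [Field E] [Field L] [Algebra A E] [Algebra A L] [Algebra E L]
    [IsScalarTower A E L] [IsPurelyInseparable.HasExponent E L] {p : ℕ} [ExpChar A p] [ExpChar E p]
    (hp : (frobenius A p).Finite) [Module.Finite A (integralClosure A E)] :
    Module.Finite A (integralClosure A L) := by
  let e := IsPurelyInseparable.exponent E L
  let F : L →+* E := IsPurelyInseparable.iterateFrobenius E L p (le_refl e)
  have F_comp_algebraMap :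
      (algebraMap A E).comp (iterateFrobenius A p e) = F.comp (algebraMap A L) := by
    ext a
    rw [RingHom.comp_apply, RingHom.comp_apply, IsScalarTower.algebraMap_apply A E L,
      IsPurelyInseparable.iterateFrobenius_algebraMap, iterateFrobenius_def, map_pow]
  let g : integralClosure A L →ₛₗ[iterateFrobenius A p e] integralClosure A E :=
    { F.restrict (integralClosure A L) (integralClosure A E)
        fun x hx ↦ hx.map_of_comp_eq (iterateFrobenius A p e) F F_comp_algebraMap with
      map_smul' := fun a x ↦ Subtype.ext <| by
        change F (a • (x : L)) = iterateFrobenius A p e a • F x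
        rw [Algebra.smul_def, Algebra.smul_def, map_mul]
        exact congrArg (· * F x) (RingHom.congr_fun F_comp_algebraMap a).symm }
  exact moduleFinite_of_injective_semilinearMap (iterateFrobenius_finite hp e) g
    fun x y hxy ↦ Subtype.ext (F.injective (congrArg Subtype.val hxy))

theorem moduleFinite_integralClosure_of_frobenius_finite (A K : Type*) {L : Type*} [CommRing A]
    [IsNoetherianRing A] [IsIntegrallyClosed A] [Field K] [Algebra A K] [IsFractionRing A K]
    [Field L] [Algebra A L] [Algebra K L] [IsScalarTower A K L] [FiniteDimensional K L] {p : ℕ}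
    [ExpChar A p] (hp : (frobenius A p).Finite) : Module.Finite A (integralClosure A L) := by
  have : IsDomain A := (IsFractionRing.injective A K).isDomain
  have : ExpChar K p := expChar_of_injective_algebraMap (IsFractionRing.injective A K) p
  have : Module.Finite A (integralClosure A (separableClosure K L)) :=
    IsIntegralClosure.finite A K (separableClosure K L) _
  have : IsScalarTower A (separableClosure K L) L := .to₁₃₄ A K _ L
  exact moduleFinite_integralClosure_of_isPurelyInseparable (E := separableClosure K L) hp

theorem moduleFinite_integralClosure_of_isIntegral (A R L : Type*) [CommRing A] [IsNoetherianRing A]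
    [CommRing R] [CommRing L] [Algebra A R] [Algebra.IsIntegral A R] [Algebra A L] [Algebra R L]
    [IsScalarTower A R L] [Module.Finite A (integralClosure A L)] :
    Module.Finite R (integralClosure R L) := by
  have le : (integralClosure R L).restrictScalars A ≤ integralClosure A L :=
    fun x hx ↦ isIntegral_trans (R := A) x hx
  have : Module.Finite A (integralClosure R L) :=
    .of_injective (Subalgebra.inclusion le).toLinearMap (Subalgebra.inclusion_injective le)
  exact .of_restrictScalars_finite A R _

theorem moduleFinite_integralClosure {R : Type*} [CommRing R] [IsDomain R] [IsNoetherianRing R]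
    [IsLocalRing R] [IsAdicComplete (maximalIdeal R) R] [Finite (ResidueField R)]
    (K L : Type*) [Field K] [Algebra R K] [IsFractionRing R K] [Field L] [Algebra R L] [Algebra K L]
    [IsScalarTower R K L] [FiniteDimensional K L] : Module.Finite R (integralClosure R L) := by
  obtain ⟨A, _, _, φ, φ_finite, φ_injective⟩ := exists_finite_injective_ringHom R
  obtain ⟨p, _⟩ := ExpChar.exists A
  algebraize [φ]
  let _ : Algebra A K := .compHom K φ
  let _ : Algebra A L := .compHom L φ
  have : IsScalarTower A R K := .of_algebraMap_eq' rfl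
  have : IsScalarTower A R L := .of_algebraMap_eq' rfl
  have : IsScalarTower A K L := .to₁₃₄ A R K L
  have : FaithfulSMul A R := (faithfulSMul_iff_algebraMap_injective A R).mpr φ_injective
  have : FaithfulSMul A K := .trans A R K
  let _ := FractionRing.liftAlgebra A K
  have : FiniteDimensional (FractionRing A) K := .of_isLocalization A R A⁰
  let _ : Algebra (FractionRing A) L := .compHom L (algebraMap (FractionRing A) K)
  have : IsScalarTower (FractionRing A) K L := .of_algebraMap_eq' rfl
  have : IsScalarTower A (FractionRing A) L := .to₁₂₄ A (FractionRing A) K L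
  have : FiniteDimensional (FractionRing A) L := Module.Finite.trans K L
  have : Module.Finite A (integralClosure A L) :=
    moduleFinite_integralClosure_of_frobenius_finite A (FractionRing A) (frobenius_finite p)
  exact moduleFinite_integralClosure_of_isIntegral A R L

end IntegralClosure

section Locality

theorem exists_isIdempotentElem_mk_eq {S : Type*} [CommRing S] {J : Ideal S} [HenselianRing S J]
    {a : S} (ha : IsIdempotentElem (Ideal.Quotient.mk J a)) :
    ∃ e : S, IsIdempotentElem e ∧ Ideal.Quotient.mk J e = Ideal.Quotient.mk J a := by
  let f : Polynomial S := .X ^ 2 - .X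
  have f_monic : f.Monic :=
    Polynomial.monic_X_pow_sub (Polynomial.degree_X_le.trans_lt (by norm_num))
  have eval_mem : f.eval a ∈ J := by
    rw [← Ideal.Quotient.eq_zero_iff_mem]
    simp [f, pow_two, ha.eq]
  -- The derivative `2 * a - 1` squares to `1` modulo `J`.
  have derivative_isUnit : IsUnit (Ideal.Quotient.mk J (f.derivative.eval a)) := by
    refine IsUnit.of_mul_eq_one (Ideal.Quotient.mk J (f.derivative.eval a)) ?_
    simp only [f, Polynomial.derivative_X_sq, Polynomial.derivative_X,
      Polynomial.eval_sub, Polynomial.eval_mul, Polynomial.eval_C, Polynomial.eval_X,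
      Polynomial.eval_one, map_sub, map_mul, map_one]
    have map_two : Ideal.Quotient.mk J 2 = 2 := map_ofNat _ 2
    rw [map_two]
    linear_combination (4 : S ⧸ J) * ha.eq
  obtain ⟨e, he, hea⟩ := HenselianRing.is_henselian f f_monic a eval_mem derivative_isUnit
  refine ⟨e, ?_, Ideal.Quotient.eq.mpr hea⟩
  have : e ^ 2 - e = 0 := by simpa [f, Polynomial.IsRoot] using he
  rwa [sub_eq_zero, pow_two] at this

theorem isLocalRing_of_isArtinianRing_of_isIdempotentElem {Q : Type*} [CommRing Q] [Nontrivial Q]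
    [IsArtinianRing Q] (h : ∀ e : Q, IsIdempotentElem e → e = 0 ∨ e = 1) : IsLocalRing Q := by
  refine .of_isUnit_or_isUnit_one_sub_self fun a ↦ ?_
  obtain ⟨n, b, hb⟩ := IsArtinian.exists_pow_succ_smul_dvd a (1 : Q)
  simp only [smul_eq_mul, mul_one, Nat.succ_eq_add_one] at hb
  have pow_eq (k : ℕ) : a ^ n = a ^ (n + k) * b ^ k := by
    induction k with
    | zero => simp
    | succ k ih =>
      calc a ^ n = a ^ (n + 1) * b := hb.symm
        _ = a * a ^ n * b := by ring
        _ = a * (a ^ (n + k) * b ^ k) * b := by rw [← ih]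
        _ = a ^ (n + (k + 1)) * b ^ (k + 1) := by ring
  have idempotent : IsIdempotentElem (a ^ n * b ^ n) :=
    calc a ^ n * b ^ n * (a ^ n * b ^ n) = a ^ (n + n) * b ^ n * b ^ n := by ring
      _ = a ^ n * b ^ n := by rw [← pow_eq n]
  have pow_mul_idempotent : a ^ n * (a ^ n * b ^ n) = a ^ n := by
    rw [← mul_assoc, ← pow_add, ← pow_eq n]
  rcases h _ idempotent with h₀ | h₁
  · have : a ^ n = 0 := by rw [← pow_mul_idempotent, h₀, mul_zero]
    exact .inr (IsNilpotent.isUnit_one_sub ⟨n, this⟩)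
  · have : a * b = 1 := (IsUnit.of_mul_eq_one _ h₁).mul_left_cancel <| by
      rw [← mul_assoc, ← pow_succ, hb, mul_one]
    exact .inl (.of_mul_eq_one b this)

theorem isLocalRing_of_henselianRing_of_isArtinianRing_quotient {S : Type*} [CommRing S]
    [Nontrivial S] (J : Ideal S) [HenselianRing S J] [IsArtinianRing (S ⧸ J)]
    (h : ∀ e : S, IsIdempotentElem e → e = 0 ∨ e = 1) : IsLocalRing S := by
  have : IsLocalHom (Ideal.Quotient.mk J) := isLocalHom_of_le_jacobson_bot J HenselianRing.jac
  have : Nontrivial (S ⧸ J) := not_subsingleton_iff_nontrivial.mp fun _ ↦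
    not_isUnit_zero (isUnit_of_map_unit (Ideal.Quotient.mk J) (0 : S) (isUnit_of_subsingleton _))
  have : IsLocalRing (S ⧸ J) := by
    refine isLocalRing_of_isArtinianRing_of_isIdempotentElem fun a ha ↦ ?_
    obtain ⟨a, rfl⟩ := Ideal.Quotient.mk_surjective a
    obtain ⟨e, he, hea⟩ := exists_isIdempotentElem_mk_eq ha
    rw [← hea]
    exact (h e he).imp (by rintro rfl; exact map_zero _) (by rintro rfl; exact map_one _)
  exact RingHom.domain_isLocalRing (Ideal.Quotient.mk J)

theorem isLocalRing_of_moduleFinite (R S : Type*) [CommRing R] [IsNoetherianRing R] [IsLocalRing R]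
    [IsAdicComplete (maximalIdeal R) R] [CommRing S] [IsDomain S] [Algebra R S]
    [Module.Finite R S] : IsLocalRing S := by
  let J : Ideal S := (maximalIdeal R).map (algebraMap R S)
  have : IsHausdorff (maximalIdeal R) S :=
    .of_le_jacobson _ _ (jacobson_eq_maximalIdeal ⊥ bot_ne_top).ge
  have : IsPrecomplete (maximalIdeal R) S := isPrecomplete_of_finite S _
  have : IsAdicComplete J S := (IsAdicComplete.map_algebraMap_iff _ _).mpr { }
  have : IsArtinianRing (R ⧸ maximalIdeal R) :=
    inferInstanceAs (IsArtinianRing (ResidueField R))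
  have : Module.Finite (R ⧸ maximalIdeal R) (S ⧸ J) := .of_restrictScalars_finite R _ _
  have : IsArtinianRing (S ⧸ J) := .of_finite (R ⧸ maximalIdeal R) _
  exact isLocalRing_of_henselianRing_of_isArtinianRing_quotient J
    fun _ ↦ IsIdempotentElem.iff_eq_zero_or_one.mp

end Locality

theorem integralClosure_isLocalRing_finite_krullDim_general (R K L : Type*) [CommRing R]
    [IsDomain R] [IsNoetherianRing R] [IsLocalRing R] [IsAdicComplete (maximalIdeal R) R]
    [Finite (ResidueField R)] [Field K] [Algebra R K] [IsFractionRing R K] [Field L] [Algebra R L]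
    [Algebra K L] [IsScalarTower R K L] [FiniteDimensional K L] :
    IsLocalRing (integralClosure R L) ∧
      Module.Finite R (integralClosure R L) ∧
      IsNoetherianRing (integralClosure R L) ∧
      ringKrullDim (integralClosure R L) = ringKrullDim R := by
  have finite : Module.Finite R (integralClosure R L) := moduleFinite_integralClosure K L
  have : FaithfulSMul R L := .trans R K L
  exact ⟨isLocalRing_of_moduleFinite R _, finite, .of_finite R _,
    ringKrullDim_eq_of_isIntegral_of_isDomain R _⟩

/-- The integral closure `S` of a commutative Noetherian local pro-`p`
domain `R` in its fraction field is local, module-finite over `R` (in particular a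
Noetherian ring), and has the same Krull dimension as `R`. -/
theorem integralClosure_isLocalRing_finite_krullDim (p : ℕ) [Fact p.Prime] (R : Type)
    [CommRing R] [IsDomain R] [IsNoetherianRing R] [IsLocalRing R]
    [IsAdicComplete (IsLocalRing.maximalIdeal R) R]
    [Finite (IsLocalRing.ResidueField R)] [CharP (IsLocalRing.ResidueField R) p] :
    IsLocalRing (integralClosure R (FractionRing R)) ∧
      Module.Finite R (integralClosure R (FractionRing R)) ∧
      IsNoetherianRing (integralClosure R (FractionRing R)) ∧
      ringKrullDim (integralClosure R (FractionRing R)) = ringKrullDim R := by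
  exact integralClosure_isLocalRing_finite_krullDim_general R (FractionRing R) (FractionRing R)
end

section
/- Let R be a Henselian local integral domain with fraction field D, and let v be a multiplicative valuation on D with values in the nonnegative reals such that v(x) ≤ 1 for the image x of every element of R and v(m) < 1 for the image m of every element of the maximal ideal of R. If s lies in the integral closure of R in D and v(s) = 1, then s is invertible in the integral closure, i.e. s ≠ 0 and s⁻¹ is integral over R. -/
open scoped NNReal

/-!
Take a monic `p` over `R` with `p(s) = 0`. Over the residue field `p` is `X ^ n` times a polynomial
not divisible by `X`. This factorization is classified by a residue-field point of an étale
`R`-algebra, the universal ring of coprime factorizations of `p`; since `R` is Henselian the point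
lifts to an `R`-point, so `p = f * g` over `R` with `f ≡ X ^ n` and `g(0)` a unit.

As `v s = 1` and `v < 1` on the maximal ideal, `f(s)` is a perturbation of `s ^ n` by terms of
valuation `< 1`, so `f(s) ≠ 0`. Hence `g(s) = 0`, and the reversal of `g`, whose leading
coefficient is the unit `g(0)`, is an equation of integrality for `s⁻¹`.
-/

open Polynomial IsLocalRing

section Henselian

variable {R : Type*} [CommRing R] [HenselianLocalRing R]

theorem exists_algHom_residue_comp_eq_of_isStandardEtale {S : Type*} [CommRing S] [Algebra R S]
    [Algebra.IsStandardEtale R S] (φ : S →ₐ[R] ResidueField R) :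
    ∃ σ : S →ₐ[R] R, (Algebra.ofId R (ResidueField R)).comp σ = φ := by
  obtain ⟨P⟩ := Algebra.IsStandardEtale.nonempty_standardEtalePresentation (R := R) (S := S)
  have hφ : P.HasMap (φ P.x) := P.hasMap.map φ
  have simple_root_lifts := ((HenselianLocalRing.TFAE R).out 0 1 :).mp ‹HenselianLocalRing R›
  obtain ⟨a, ha, haφ⟩ :=
    simple_root_lifts P.f P.monic_f (φ P.x) hφ.1 hφ.isUnit_derivative_f.ne_zero
  have haP : P.HasMap a := by
    refine ⟨by simpa using ha, isUnit_of_map_unit (residue R) _ ?_⟩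
    rw [← ResidueField.algebraMap_eq, ← aeval_algebraMap_apply, ResidueField.algebraMap_eq, haφ]
    exact hφ.2
  refine ⟨(P.lift a haP).comp P.equivRing.toAlgHom, P.hom_ext ?_⟩
  simpa [Algebra.ofId_apply] using haφ

theorem exists_algHom_residue_comp_eq_of_etale {S : Type*} [CommRing S] [Algebra R S]
    [Algebra.Etale R S] (φ : S →ₐ[R] ResidueField R) :
    ∃ σ : S →ₐ[R] R, (Algebra.ofId R (ResidueField R)).comp σ = φ := by
  have : (RingHom.ker φ).IsPrime := RingHom.ker_isPrime _
  obtain ⟨f, hf, _⟩ := Algebra.IsEtaleAt.exists_isStandardEtale (R := R) (RingHom.ker φ)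
  let φf : Localization.Away f →ₐ[R] ResidueField R :=
    IsLocalization.Away.liftAlgHom f (f := φ) (IsUnit.mk0 _ hf)
  obtain ⟨σ, hσ⟩ := exists_algHom_residue_comp_eq_of_isStandardEtale φf
  refine ⟨σ.comp (IsScalarTower.toAlgHom R S _), ?_⟩
  rw [← AlgHom.comp_assoc, hσ]
  ext x
  simp [φf]

open UniversalCoprimeFactorizationRing in
theorem exists_monic_mul_eq_of_map_residue_eq_mul {p : R[X]} (hp : p.Monic)
    {f₀ g₀ : (ResidueField R)[X]} (hf₀ : f₀.Monic) (hfg : IsCoprime f₀ g₀)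
    (hpfg : p.map (residue R) = f₀ * g₀) :
    ∃ f g : R[X], f.Monic ∧ g.Monic ∧ IsCoprime f g ∧ f * g = p ∧
      f.map (residue R) = f₀ ∧ g.map (residue R) = g₀ := by
  have hg₀ : g₀.Monic := hf₀.of_mul_monic_left (hpfg ▸ hp.map (residue R))
  have hdeg : p.natDegree = f₀.natDegree + g₀.natDegree := by
    rw [← hf₀.natDegree_mul hg₀, ← hpfg, hp.natDegree_map]
  let κ := ResidueField R
  let q₀ : MonicDegreeEq κ f₀.natDegree × MonicDegreeEq κ g₀.natDegree :=
    (.mk f₀ hf₀ rfl, .mk g₀ hg₀ rfl)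
  let p' : MonicDegreeEq R p.natDegree := .mk p hp rfl
  let φ := (homEquiv κ _ _ hdeg p').symm ⟨q₀, hpfg.symm, hfg⟩
  obtain ⟨σ, hσ⟩ := exists_algHom_residue_comp_eq_of_etale φ
  have hq₀ : (homEquiv κ _ _ hdeg p' ((Algebra.ofId R κ).comp σ)).1 = q₀ := by
    rw [hσ, Equiv.apply_symm_apply]
  obtain ⟨⟨⟨f, g⟩, hmul, hcop⟩, hq⟩ : ∃ q, homEquiv R _ _ hdeg p' σ = q := ⟨_, rfl⟩
  refine ⟨f.1, g.1, f.monic, g.monic, hcop, hmul.trans (map_id ..), ?_, ?_⟩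
  · have h_fst := homEquiv_comp_fst _ _ _ hdeg p' σ (Algebra.ofId R κ)
    rw [hq₀, hq] at h_fst
    exact (congrArg Subtype.val h_fst).symm
  · have h_snd := homEquiv_comp_snd _ _ _ hdeg p' σ (Algebra.ofId R κ)
    rw [hq₀, hq] at h_snd
    exact (congrArg Subtype.val h_snd).symm

theorem exists_mul_eq_and_map_residue_eq_X_pow {p : R[X]} (hp : p.Monic) :
    ∃ f g : R[X], f * g = p ∧ (∃ n, f.map (residue R) = X ^ n) ∧ IsUnit (g.coeff 0) := by
  obtain ⟨g₀, hpg₀, hXg₀⟩ :=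
    exists_eq_pow_rootMultiplicity_mul_and_not_dvd _ (hp.map (residue R)).ne_zero 0
  rw [C_0, sub_zero] at hpg₀ hXg₀
  have hcop : IsCoprime X g₀ := prime_X.coprime_iff_not_dvd.mpr hXg₀
  obtain ⟨f, g, -, -, -, hfg, hf, rfl⟩ :=
    exists_monic_mul_eq_of_map_residue_eq_mul hp (monic_X_pow _) hcop.pow_left hpg₀
  refine ⟨f, g, hfg, ⟨_, hf⟩, isUnit_of_map_unit (residue R) _ ?_⟩
  rwa [isUnit_iff_ne_zero, ← coeff_map, Ne, ← X_dvd_iff]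

end Henselian

theorem valuation_aeval_lt_one {R A Γ₀ : Type*} [CommRing R] [Ring A] [Algebra R A]
    [LinearOrderedCommMonoidWithZero Γ₀] (v : Valuation A Γ₀) {s : A} (hs : v s ≤ 1)
    {f : R[X]} (hf : ∀ i, v (algebraMap R A (f.coeff i)) < 1) : v (aeval s f) < 1 := by
  rw [aeval_eq_sum_range]
  have hzero : (0 : Γ₀) < 1 := by
    simpa [coeff_eq_zero_of_natDegree_lt] using hf (f.natDegree + 1)
  refine v.map_sum_lt' hzero fun i _ => ?_
  rw [Algebra.smul_def, map_mul, map_pow]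
  exact (mul_le_of_le_one_right' (pow_le_one' hs i)).trans_lt (hf i)

theorem valuation_aeval_eq_one {R A Γ₀ : Type*} [CommRing R] [IsLocalRing R] [Ring A]
    [Algebra R A] [LinearOrderedCommMonoidWithZero Γ₀] (v : Valuation A Γ₀)
    (hlt : ∀ m ∈ maximalIdeal R, v (algebraMap R A m) < 1) {s : A} (hs : v s = 1)
    {f : R[X]} {n : ℕ} (hf : f.map (residue R) = X ^ n) : v (aeval s f) = 1 := by
  have hcoeff (i : ℕ) : (f - X ^ n).coeff i ∈ maximalIdeal R := by
    rw [← residue_eq_zero_iff, ← coeff_map]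
    simp [hf]
  have hvpow : v (s ^ n) = 1 := by rw [map_pow, hs, one_pow]
  rw [← hvpow]
  refine v.map_eq_of_sub_lt ?_
  simpa [hvpow] using valuation_aeval_lt_one v hs.le fun i => hlt _ (hcoeff i)

theorem isIntegral_invOf_of_aeval_eq_zero {R A : Type*} [CommRing R] [CommRing A] [Algebra R A]
    {f : R[X]} (hf : IsUnit (f.coeff 0)) {s : A} [Invertible s] (hs : aeval s f = 0) :
    IsIntegral R (⅟s) := by
  nontriviality R
  have hroot : aeval (⅟s) f.reverse = 0 := (eval₂_reverse_eq_zero_iff _ s f).mpr hs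
  have hlead : f.reverse.leadingCoeff = f.coeff 0 := by
    rw [reverse_leadingCoeff, trailingCoeff_eq_coeff_zero hf.ne_zero]
  have := isIntegral_leadingCoeff_smul f.reverse (⅟s) hroot
  rw [hlead] at this
  simpa [smul_smul] using this.smul (↑hf.unit⁻¹ : R)

theorem inv_integral_of_valuation_eq_one_general {R K Γ₀ : Type*} [CommRing R]
    [HenselianLocalRing R] [Field K] [Algebra R K] [LinearOrderedCommMonoidWithZero Γ₀]
    (v : Valuation K Γ₀) (hlt : ∀ m ∈ maximalIdeal R, v (algebraMap R K m) < 1)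
    {s : K} (hs : IsIntegral R s) (hv : v s = 1) : s ≠ 0 ∧ IsIntegral R s⁻¹ := by
  have hv_ne {x : K} (hx : v x = 1) : x ≠ 0 := by
    rintro rfl
    have := hlt 0 (zero_mem _)
    rw [map_zero, hx] at this
    exact this.false
  obtain ⟨p, hp, hps⟩ := hs
  obtain ⟨f, g, rfl, ⟨n, hf⟩, hg⟩ := exists_mul_eq_and_map_residue_eq_X_pow hp
  have hfs : aeval s f ≠ 0 := hv_ne (valuation_aeval_eq_one v hlt hv hf)
  have hgs : aeval s g = 0 := by
    rw [← aeval_def, map_mul] at hps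
    exact (mul_eq_zero.mp hps).resolve_left hfs
  let _ : Invertible s := invertibleOfNonzero (hv_ne hv)
  exact ⟨hv_ne hv, invOf_eq_inv s ▸ isIntegral_invOf_of_aeval_eq_zero hg hgs⟩

/-- Let `R` be a Henselian local domain with fraction field `D`, and let
`v` be a valuation on `D` with `v x ≤ 1` on the image of `R` and `v m < 1` on the image of
the maximal ideal. If `s` is in the integral closure of `R` in `D` and `v s = 1`, then `s`
is invertible in the integral closure: `s ≠ 0` and `s⁻¹` is integral over `R`. -/
theorem inv_integral_of_valuation_eq_one (R : Type) [CommRing R] [IsDomain R]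
    [HenselianLocalRing R] (v : Valuation (FractionRing R) ℝ≥0)
    (hle : ∀ x : R, v (algebraMap R (FractionRing R) x) ≤ 1)
    (hlt : ∀ m ∈ IsLocalRing.maximalIdeal R, v (algebraMap R (FractionRing R) m) < 1)
    (s : FractionRing R) (hs : s ∈ integralClosure R (FractionRing R)) (hv : v s = 1) :
    s ≠ 0 ∧ IsIntegral R s⁻¹ :=
  inv_integral_of_valuation_eq_one_general v hlt hs hv
end

section
/- Let p be a prime, let R be a commutative Noetherian local pro-p domain, let W be a finitely generated R-module that is torsion-free over R, and let G be a subgroup of the group of R-linear automorphisms of W. Then there exist a commutative ring S that is a Noetherian local integral domain, Hausdorff and complete with respect to the adic topology of its maximal ideal, with finite residue field of characteristic p, satisfying char S = char R and with Krull dimension equal to that of R, together with a natural number n and an injective group homomorphism from G into GL_n(S). -/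
/-- The data asserted to exist in Statement 5: a commutative Noetherian local pro-`p`
domain `S` with the same characteristic and Krull dimension as `R`, together with `n : ℕ`
and an injective group homomorphism `G →* GL_n(S)`. -/
structure LinearisationOverProPDomain (p : ℕ) (R : Type) [CommRing R] (G : Type)
    [Group G] : Type 1 where
  S : Type
  [commRing : CommRing S]
  [isDomain : IsDomain S]
  [isNoetherianRing : IsNoetherianRing S]
  [isLocalRing : IsLocalRing S]
  [isAdicComplete : IsAdicComplete (IsLocalRing.maximalIdeal S) S]
  [finiteResidueField : Finite (IsLocalRing.ResidueField S)]
  [charPResidueField : CharP (IsLocalRing.ResidueField S) p]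
  char_eq : ringChar S = ringChar R
  dim_eq : ringKrullDim S = ringKrullDim R
  n : ℕ
  f : G →* Matrix.GeneralLinearGroup (Fin n) S
  injective : Function.Injective f

/-!
Choose a valuation subring `V` of `K = Frac R` dominating `R`. The `V`-lattice spanned by `W` in
`K ⊗ W` is free, and a basis of it involves only finitely many elements of `V`; they generate a
finitely generated `R`-algebra `B ⊆ V` with `End_R W` embedded in `Mat_n(B)`. Since `V` dominates
`R`, some maximal ideal `Q` of `B` lies over the maximal ideal of `R`; it has finite residue field
by the Nullstellensatz and height at most `dim R` by the altitude inequality. The local ring `B_Q`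
then becomes a pro-`p` domain of dimension `dim R` in three steps: adjoin the missing number of
power series variables, complete, and divide by a minimal prime of maximal dimension. The last
quotient loses nothing of `B_Q`, because the completion is flat and so nonzero elements of `B_Q`
remain regular in it, whereas elements of minimal primes are zero divisors.
-/

universe u

section Altitude

open Polynomial IsLocalRing

variable {A : Type*} [CommRing A]

theorem height_add_one_le_height_comap_of_surjective {B : Type*} [CommRing B] {f : A →+* B}
    (hf : Function.Surjective f) {r : A} (hr : r ∈ nonZeroDivisors A) (hfr : f r = 0)
    (Q : Ideal B) [Q.IsPrime] : Q.height + 1 ≤ (Q.comap f).height := by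
  let P := Q.comap f
  let g : Localization.AtPrime P →+* Localization.AtPrime Q := Localization.localRingHom P Q f rfl
  have hg : Function.Surjective g :=
    (RingHom.surjectiveOnStalks_of_surjective hf).localRingHom_surjective P Q rfl
  have hgr : g (algebraMap A _ r) = 0 := by
    rw [Localization.localRingHom_to_map, hfr, map_zero]
  have hdim := ringKrullDim_succ_le_of_surjective g hg
    (IsLocalization.map_nonZeroDivisors_le P.primeCompl (Localization.AtPrime P)
      (Submonoid.mem_map_of_mem _ hr)) hgr
  rw [IsLocalization.AtPrime.ringKrullDim_eq_height P (Localization.AtPrime P),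
    IsLocalization.AtPrime.ringKrullDim_eq_height Q (Localization.AtPrime Q)] at hdim
  exact_mod_cast hdim

attribute [local instance] Polynomial.algebra Polynomial.isLocalization in
theorem polynomial_height_le_height_under_add_one [IsNoetherianRing A] (P : Ideal A[X])
    [P.IsPrime] : P.height ≤ (P.under A).height + 1 := by
  let p := P.under A
  let Aₚ := Localization.AtPrime p
  have hdisj : Disjoint (p.primeCompl.map C : Set A[X]) P :=
    Set.disjoint_left.mpr fun _ ⟨_, ha, hC⟩ hmem ↦ ha (hC.symm ▸ hmem :)
  let P' : Ideal Aₚ[X] := P.map (algebraMap A[X] Aₚ[X])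
  have hP' : P'.IsPrime := IsLocalization.isPrime_of_isPrime_disjoint _ _ P ‹_› hdisj
  have hover : P'.LiesOver (p.map (algebraMap A Aₚ)) :=
    IsLocalization.liesOver_of_isPrime_of_disjoint p.primeCompl _ _ hdisj
  obtain ⟨M, hM, hPM⟩ := P'.exists_le_maximal hP'.ne_top
  have hMover : M.LiesOver (maximalIdeal Aₚ) := by
    refine ⟨(maximalIdeal.isMaximal Aₚ).eq_of_le Ideal.IsPrime.ne_top' ?_⟩
    rw [← Localization.AtPrime.map_eq_maximalIdeal, hover.over]
    exact Ideal.comap_mono hPM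
  calc P.height = P'.height :=
        (IsLocalization.height_map_of_disjoint (p.primeCompl.map C) P hdisj).symm
    _ ≤ M.height := Ideal.height_mono hPM
    _ = (maximalIdeal Aₚ).height + 1 := Polynomial.height_eq_height_add_one _ M
    _ = p.height + 1 := by
      rw [← IsLocalization.height_under p.primeCompl,
        IsLocalization.AtPrime.under_maximalIdeal Aₚ p]

-- Adjoining `x` passes from `A[X]` to a quotient by a nonzero ideal, and the loss of height there
-- cancels the height gained in going from `A` to `A[X]`.
theorem height_le_height_under_of_adjoin_singleton [IsDomain A] [IsNoetherianRing A] {C : Type*}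
    [CommRing C] [Algebra A C] {x : C} (hx : IsAlgebraic A x)
    (Q : Ideal (Algebra.adjoin A {x})) [Q.IsPrime] : Q.height ≤ (Q.under A).height := by
  obtain ⟨r, hr, hrx⟩ := hx
  let φ : A[X] →ₐ[A] Algebra.adjoin A {x} :=
    (aeval x).codRestrict _ fun _ ↦ aeval_mem_adjoin_singleton A x
  have hsurj : Function.Surjective φ := by
    rintro ⟨y, hy⟩
    rw [Algebra.adjoin_singleton_eq_range_aeval] at hy
    obtain ⟨q, rfl⟩ := hy
    exact ⟨q, rfl⟩
  have hφr : φ r = 0 := Subtype.ext hrx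
  have hlt := height_add_one_le_height_comap_of_surjective (f := φ.toRingHom)
    hsurj (mem_nonZeroDivisors_of_ne_zero hr) hφr Q
  have hle := polynomial_height_le_height_under_add_one (Q.comap φ.toRingHom)
  have hunder : (Q.comap φ.toRingHom).under A = Q.under A := by
    rw [Ideal.under, Ideal.under, Ideal.comap_comap, ← φ.comp_algebraMap]
    rfl
  rw [hunder] at hle
  exact (ENat.add_le_add_iff_right ENat.one_ne_top).mp (hlt.trans hle)

theorem height_le_height_under_of_fg [IsNoetherianRing A] {C : Type*} [CommRing C]
    [IsDomain C] [Algebra A C] [FaithfulSMul A C] [Algebra.IsAlgebraic A C] {B : Subalgebra A C}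
    (hB : B.FG) (Q : Ideal B) [Q.IsPrime] : Q.height ≤ (Q.under A).height := by
  classical
  have : IsDomain A := (FaithfulSMul.algebraMap_injective A C).isDomain
  obtain ⟨s, rfl⟩ := hB
  induction s using Finset.induction_on with
  | empty =>
    revert Q
    rw [Finset.coe_empty, Algebra.adjoin_empty, ← Algebra.adjoin_singleton_zero A]
    exact fun Q _ ↦ height_le_height_under_of_adjoin_singleton isAlgebraic_zero Q
  | insert x s _ ih =>
    let B₀ := Algebra.adjoin A (s : Set C)
    have hinsert : Algebra.adjoin A (↑(insert x s) : Set C) =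
        (Algebra.adjoin B₀ {x}).restrictScalars A := by
      rw [Finset.coe_insert, Set.insert_eq, Set.union_comm, Algebra.adjoin_union_eq_adjoin_adjoin]
    have : IsNoetherianRing B₀ :=
      isNoetherianRing_of_fg (Subalgebra.fg_adjoin_finset s)
    revert Q
    rw [hinsert]
    intro Q _
    let Q' : Ideal (Algebra.adjoin B₀ {x}) := Q
    have : Q'.IsPrime := ‹_›
    have hx : IsAlgebraic B₀ x :=
      (Algebra.IsAlgebraic.isAlgebraic (R := A) x).extendScalars
        (FaithfulSMul.algebraMap_injective A B₀)
    exact (height_le_height_under_of_adjoin_singleton hx Q').trans (ih (Q'.under B₀))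

end Altitude

section Lattice

open Module Submodule

theorem free_of_isTorsionFree_of_valuationRing (V M : Type*) [CommRing V] [IsDomain V]
    [ValuationRing V] [AddCommGroup M] [Module V M] [Module.Finite V M] [IsTorsionFree V M] :
    Free V M := by
  have hflat : Flat V M := by
    rwa [Flat.flat_iff_torsion_eq_bot_of_isBezout, ← isTorsionFree_iff_torsion_eq_bot]
  exact free_of_flat_of_isLocalRing

theorem exists_basis_mem_span_repr_mem_range (V : Type*) {K E ι : Type*} [CommRing V] [IsDomain V]
    [ValuationRing V] [Field K] [Algebra V K] [IsFractionRing V K] [AddCommGroup E] [Module K E]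
    [Module V E] [IsScalarTower V K E] [Finite ι] {w : ι → E} (hw : span K (Set.range w) = ⊤) :
    ∃ (n : ℕ) (e : Basis (Fin n) K E), (∀ i, e i ∈ span V (Set.range w)) ∧
      ∀ l i, e.repr (w l) i ∈ (algebraMap V K).range := by
  let M := span V (Set.range w)
  have hM : M.IsLattice K := ⟨fg_span (Set.finite_range w), by rw [span_span_of_tower, hw]⟩
  have : IsTorsionFree V E := .trans_faithfulSMul V K E
  have : Free V M := free_of_isTorsionFree_of_valuationRing V M
  let b := finBasis V M
  let e := b.extendOfIsLattice K
  have he (i) : e i = b i := b.extendOfIsLattice_apply K i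
  refine ⟨_, e, fun i ↦ he i ▸ (b i).2, fun l i ↦ ?_⟩
  let m : M := ⟨w l, subset_span ⟨l, rfl⟩⟩
  have hm : w l = ∑ j, algebraMap V K (b.repr m j) • e j := by
    simp only [he, algebraMap_smul]
    exact_mod_cast congrArg M.subtype (b.sum_repr m).symm
  exact ⟨b.repr m i, by rw [hm, e.repr_sum_self]⟩

variable {R K E ι : Type*} [CommRing R] [Field K] [Algebra R K] [AddCommGroup E] [Module K E]

theorem repr_mem_of_mem_span (e : Basis ι K E) {B : Subalgebra R K} {X : Set E}
    (hX : ∀ x ∈ X, ∀ i, e.repr x i ∈ B) {y : E} (hy : y ∈ span B X) (i : ι) :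
    e.repr y i ∈ B := by
  induction hy using span_induction with
  | mem x hx => exact hX x hx i
  | zero => simp
  | add y z _ _ hy hz => simpa using add_mem hy hz
  | smul b y _ hy =>
    rw [Subalgebra.smul_def, map_smul]
    exact mul_mem b.2 hy

theorem toMatrixAlgEquiv_mem_of_mem_span [Fintype ι] [DecidableEq ι] (e : Basis ι K E)
    {B : Subalgebra R K} {X : Set E} (he : ∀ i, e i ∈ span B X)
    (hX : ∀ x ∈ X, ∀ i, e.repr x i ∈ B) {T : End K E} (hT : ∀ x ∈ X, T x ∈ span B X) (i j : ι) :
    LinearMap.toMatrixAlgEquiv e T i j ∈ B := by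
  rw [LinearMap.toMatrixAlgEquiv_apply]
  have hle : (span B X).map (T.restrictScalars B) ≤ span B X := by
    rwa [map_span_le]
  exact repr_mem_of_mem_span e hX (hle (mem_map_of_mem (he j))) i

theorem exists_fg_subalgebra_basis_mem_span_repr_mem {V : ValuationSubring K}
    (hV : ∀ r : R, algebraMap R K r ∈ V) [Finite ι] {w : ι → E} (hw : span K (Set.range w) = ⊤) :
    ∃ (n : ℕ) (e : Basis (Fin n) K E) (B : Subalgebra R K), B.FG ∧ (∀ x ∈ B, x ∈ V) ∧
      (∀ i, e i ∈ span B (Set.range w)) ∧ ∀ l i, e.repr (w l) i ∈ B := by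
  obtain ⟨n, e, he, hwe⟩ := exists_basis_mem_span_repr_mem_range V hw
  have hwV (l i) : e.repr (w l) i ∈ V := by
    obtain ⟨a, ha⟩ := hwe l i
    exact ha ▸ a.2
  have : Fintype ι := Fintype.ofFinite ι
  choose c hc using fun i ↦ (mem_span_range_iff_exists_fun V).mp (he i)
  -- Adjoining the coefficients of `e` in `w` and of `w` in `e` makes `e` a basis of the `B`-span of
  -- `w` as well.
  let s : Set K := Set.range (fun t : Fin n × ι ↦ (c t.1 t.2 : K)) ∪
    Set.range fun t : ι × Fin n ↦ e.repr (w t.1) t.2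
  have hcs (i l) : (c i l : K) ∈ Algebra.adjoin R s :=
    Algebra.subset_adjoin (.inl ⟨(i, l), rfl⟩)
  have hsV : s ⊆ V := by
    rintro _ (⟨t, rfl⟩ | ⟨t, rfl⟩)
    · exact (c t.1 t.2).2
    · exact hwV t.1 t.2
  refine ⟨n, e, Algebra.adjoin R s, Subalgebra.fg_def.mpr ⟨s, Set.toFinite s, rfl⟩, ?_, ?_, ?_⟩
  · intro x hx
    induction hx using Algebra.adjoin_induction with
    | mem x hx => exact hsV hx
    | algebraMap r => exact hV r
    | add x y _ _ hx hy => exact add_mem hx hy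
    | mul x y _ _ hx hy => exact mul_mem hx hy
  · intro i
    rw [← hc i]
    exact sum_mem fun l _ ↦
      smul_mem _ (⟨c i l, hcs i l⟩ : Algebra.adjoin R s) (subset_span ⟨l, rfl⟩)
  · exact fun l i ↦ Algebra.subset_adjoin (.inr ⟨(l, i), rfl⟩)

open TensorProduct in
theorem tensorProduct_mk_one_injective_of_isTorsionFree (R K W : Type*) [CommRing R]
    [IsDomain R] [Field K] [Algebra R K] [IsFractionRing R K] [AddCommGroup W] [Module R W]
    [IsTorsionFree R W] : Function.Injective (TensorProduct.mk R K W 1) := by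
  have : IsLocalizedModule (nonZeroDivisors R) (TensorProduct.mk R K W 1) :=
    (isLocalizedModule_iff_isBaseChange (nonZeroDivisors R) K _).mpr
      (TensorProduct.isBaseChange R W K)
  exact (IsLocalizedModule.injective_iff_isRegular (nonZeroDivisors R) _).mpr fun c ↦
    .of_ne_zero (nonZeroDivisors.ne_zero c.2)

open TensorProduct in
theorem exists_injective_end_to_matrix {W : Type*} [IsDomain R] [IsFractionRing R K]
    [AddCommGroup W] [Module R W] [Module.Finite R W] [IsTorsionFree R W]
    {V : ValuationSubring K} (hV : ∀ r : R, algebraMap R K r ∈ V) :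
    ∃ (n : ℕ) (B : Subalgebra R K), B.FG ∧ (∀ x ∈ B, x ∈ V) ∧
      ∃ ρ : End R W →ₐ[R] Matrix (Fin n) (Fin n) B, Function.Injective ρ := by
  let φ : W →ₗ[R] K ⊗[R] W := TensorProduct.mk R K W 1
  have hφ : Function.Injective φ := tensorProduct_mk_one_injective_of_isTorsionFree R K W
  obtain ⟨k, w, hw⟩ := Module.Finite.exists_fin (R := R) (M := W)
  let X : Set (K ⊗[R] W) := Set.range (φ ∘ w)
  have hX : X = φ '' Set.range w := Set.range_comp φ w
  have hspan : span K X = ⊤ := by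
    rw [hX, ← baseChange_span, hw, baseChange_top]
  obtain ⟨n, e, B, hBfg, hBV, he, hwB⟩ := exists_fg_subalgebra_basis_mem_span_repr_mem hV hspan
  have hXB : ∀ x ∈ X, ∀ i, e.repr x i ∈ B := by
    rintro _ ⟨l, rfl⟩
    exact hwB l
  have hentry (g : End R W) (i j) : LinearMap.toMatrixAlgEquiv e (g.baseChange K) i j ∈ B := by
    refine toMatrixAlgEquiv_mem_of_mem_span e he hXB ?_ i j
    rintro _ ⟨l, rfl⟩
    refine span_subset_span R B X ?_
    rw [hX, ← map_span, hw]
    exact ⟨g (w l), mem_top, rfl⟩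
  have hval : Function.Injective (B.val.mapMatrix (m := Fin n)) :=
    Matrix.map_injective Subtype.val_injective
  let ρ : End R W →ₐ[R] Matrix (Fin n) (Fin n) K :=
    ((LinearMap.toMatrixAlgEquiv e).toAlgHom.restrictScalars R).comp (End.baseChangeHom R K W)
  have hρ : Function.Injective ρ := (LinearMap.toMatrixAlgEquiv e).injective.comp fun g h hgh ↦
    LinearMap.ext fun x ↦ hφ (LinearMap.congr_fun hgh (φ x))
  have hρB (g) : ρ g ∈ (B.val.mapMatrix (m := Fin n)).range :=
    ⟨.of fun i j ↦ ⟨ρ g i j, hentry g i j⟩, rfl⟩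
  let ε := (AlgEquiv.ofInjective _ hval).symm
  exact ⟨n, B, hBfg, hBV, ε.toAlgHom.comp (ρ.codRestrict _ hρB),
    ε.injective.comp ((ρ.injective_codRestrict _ hρB).mpr hρ)⟩

end Lattice

section Completion

open IsLocalRing MvPowerSeries

theorem exists_mvPowerSeries_algHom_of_isAdicComplete {L S σ : Type*} [CommRing L] [CommRing S]
    [Algebra L S] [Finite σ] {I : Ideal S} [IsAdicComplete I S] {a : σ → S} (ha : ∀ i, a i ∈ I) :
    ∃ F : MvPowerSeries σ L →ₐ[L] S, ∀ i, F (X i) = a i := by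
  let J := MvPolynomial.idealOfVars σ L
  let g : MvPolynomial σ L →ₐ[L] S := MvPolynomial.aeval a
  have hg (n : ℕ) : J ^ n ≤ (I ^ n).comap g := by
    rw [← Ideal.map_le_iff_le_comap, Ideal.map_pow]
    refine Ideal.pow_right_mono ?_ n
    rw [Ideal.map_span, Ideal.span_le]
    rintro _ ⟨_, ⟨i, rfl⟩, rfl⟩
    simpa [g] using ha i
  let f (n : ℕ) : MvPowerSeries σ L →ₐ[L] S ⧸ I ^ n :=
    (Ideal.quotientMapₐ (I ^ n) g (hg n)).comp ((truncTotalAlgHom σ L n).restrictScalars L)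
  have hf {m n : ℕ} (hmn : m ≤ n) :
      (Ideal.Quotient.factorₐ L (Ideal.pow_le_pow_right hmn)).comp (f n) = f m := by
    ext x
    refine (Ideal.Quotient.eq (I := I ^ m)).mpr ?_
    exact map_sub g _ _ ▸ hg m (truncTotal_sub_truncTotal_mem_pow_idealOfVars hmn le_rfl x)
  let F := IsAdicComplete.liftAlgHom I f hf
  refine ⟨F, congrFun (IsHausdorff.funext' (f := fun i ↦ F (X i)) I fun n j ↦ ?_)⟩
  have hX : truncTotalAlgHom σ L n (X j) = Ideal.Quotient.mk (J ^ n) (MvPolynomial.X j) := by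
    rw [← MvPolynomial.coe_X]
    exact (truncTotalAlgHom σ L n).commutes (MvPolynomial.X j)
  rw [IsAdicComplete.mk_liftAlgHom]
  change Ideal.quotientMapₐ (I ^ n) g (hg n) (truncTotalAlgHom σ L n (X j)) = _
  rw [hX]
  exact congrArg _ (MvPolynomial.aeval_X a j)

theorem isNoetherianRing_of_isAdicComplete {L S : Type*} [CommRing L] [IsNoetherianRing L]
    [CommRing S] [Algebra L S] {I : Ideal S} [IsAdicComplete I S] (hI : I.FG)
    (hL : Function.Surjective (algebraMap L (S ⧸ I))) : IsNoetherianRing S := by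
  obtain ⟨k, a, rfl⟩ := Submodule.fg_iff_exists_fin_generating_family.mp hI
  obtain ⟨F, hF⟩ := exists_mvPowerSeries_algHom_of_isAdicComplete (L := L)
    fun i ↦ Ideal.subset_span (Set.mem_range_self (f := a) i)
  have hmap : (Ideal.span (Set.range (X (R := L)))).map F.toRingHom = Ideal.span (Set.range a) := by
    rw [Ideal.map_span, ← Set.range_comp]
    exact congrArg (Ideal.span <| Set.range ·) (funext hF)
  have : IsHausdorff ((Ideal.span (Set.range (X (R := L)))).map F.toRingHom) S := by
    rw [hmap]
    exact IsAdicComplete.toIsHausdorff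
  refine isNoetherianRing_of_surjective _ S F.toRingHom
    (surjective_of_mk_map_comp_surjective (I := Ideal.span (Set.range X)) _ ?_)
  rw [hmap]
  intro y
  obtain ⟨x, rfl⟩ := hL y
  exact ⟨C x, congrArg _ (F.commutes x)⟩

instance isNoetherianRing_adicCompletion_maximalIdeal (L : Type*) [CommRing L]
    [IsNoetherianRing L] [IsLocalRing L] :
    IsNoetherianRing (AdicCompletion (maximalIdeal L) L) := by
  let A := AdicCompletion (maximalIdeal L) L
  refine isNoetherianRing_of_isAdicComplete (L := L) (I := maximalIdeal A) ?_ ?_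
  · rw [AdicCompletion.maximalIdeal_eq_map]
    exact (maximalIdeal L).fg_of_isNoetherianRing.map _
  · exact (AdicCompletion.residueField_map_bijective L).2.comp residue_surjective

theorem isAdicComplete_map_quotient {A : Type*} [CommRing A] [IsNoetherianRing A] {I : Ideal A}
    [IsAdicComplete I A] (q : Ideal A) :
    IsAdicComplete (I.map (Ideal.Quotient.mk q)) (A ⧸ q) := by
  have : IsPrecomplete I (A ⧸ q) := by
    rw [← AdicCompletion.of_surjective_iff]
    intro y
    obtain ⟨x, rfl⟩ := AdicCompletion.map_surjective I (f := q.mkQ) (Submodule.mkQ_surjective q) y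
    obtain ⟨x, rfl⟩ := AdicCompletion.of_surjective I A x
    exact ⟨q.mkQ x, rfl⟩
  have : IsHausdorff I (A ⧸ q) :=
    IsHausdorff.of_le_jacobson I (A ⧸ q) (IsAdicComplete.le_jacobson_bot I)
  exact (IsAdicComplete.map_algebraMap_iff I _).mpr ⟨⟩

theorem exists_mem_minimalPrimes_ringKrullDim_quotient_eq (A : Type*) [CommRing A]
    [IsNoetherianRing A] [IsLocalRing A] :
    ∃ q ∈ minimalPrimes A, ringKrullDim (A ⧸ q) = ringKrullDim A := by
  obtain ⟨l, -, hlen⟩ := Ideal.exists_ltSeries_length_eq_height (maximalIdeal A)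
  obtain ⟨q, hq, hql⟩ := Ideal.exists_minimalPrimes_le (J := l.head.asIdeal) bot_le
  refine ⟨q, hq, (ringKrullDim_quotient_le q).antisymm ?_⟩
  rw [← maximalIdeal_height_eq_ringKrullDim, ← hlen, ringKrullDim_quotient]
  let l' : LTSeries (PrimeSpectrum.zeroLocus (R := A) q) :=
    { l with toFun := fun i ↦ ⟨l i, hql.trans (l.head_le i)⟩ }
  exact Order.LTSeries.length_le_krullDim l'

theorem injective_algebraMap_quotient_of_mem_minimalPrimes {L A : Type*} [CommRing L]
    [IsDomain L] [CommRing A] [Algebra L A] [Module.Flat L A] {q : Ideal A}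
    (hq : q ∈ minimalPrimes A) :
    Function.Injective (algebraMap L (A ⧸ q)) := by
  refine (injective_iff_map_eq_zero _).mpr fun x hx ↦ by_contra fun hne ↦ ?_
  have hreg := Module.Flat.isSMulRegular_of_nonZeroDivisors (M := A)
    (mem_nonZeroDivisors_of_ne_zero hne)
  refine Set.disjoint_left.mp (Ideal.disjoint_nonZeroDivisors_of_mem_minimalPrimes hq)
    (Ideal.Quotient.eq_zero_iff_mem.mp hx) (mem_nonZeroDivisors_iff_right.mpr fun y hy ↦ hreg ?_)
  simpa [Algebra.smul_def, mul_comm] using hy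

theorem ringKrullDim_adicCompletion_maximalIdeal (L : Type*) [CommRing L] [IsNoetherianRing L]
    [IsLocalRing L] :
    ringKrullDim (AdicCompletion (maximalIdeal L) L) = ringKrullDim L := by
  let A := AdicCompletion (maximalIdeal L) L
  have hmax : (maximalIdeal L).map (algebraMap L A) = maximalIdeal A :=
    AdicCompletion.maximalIdeal_eq_map.symm
  have : (maximalIdeal A).LiesOver (maximalIdeal L) :=
    ⟨(maximalIdeal_comap (algebraMap L A)).symm⟩
  have : Nontrivial (A ⧸ (maximalIdeal L).map (algebraMap L A)) := by
    rw [hmax]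
    infer_instance
  rw [← maximalIdeal_height_eq_ringKrullDim, ← maximalIdeal_height_eq_ringKrullDim,
    Ideal.height_eq_height_add_of_liesOver_of_hasGoingDown (maximalIdeal L) (maximalIdeal A),
    hmax, Ideal.map_quotient_self, Ideal.height_bot, add_zero]

end Completion

section ProPDomain

open IsLocalRing

/-- A commutative Noetherian local pro-`p` domain: the class of rings over which modules are to be
linearised. It is a predicate on a commutative ring, and `IsAdicComplete` includes being
Hausdorff. -/
structure IsProPDomain (p : ℕ) (S : Type*) [CommRing S] : Prop
    extends IsDomain S, IsNoetherianRing S, IsLocalRing S where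
  isAdicComplete : IsAdicComplete (maximalIdeal S) S
  finite_residueField : Finite (ResidueField S)
  charP_residueField : CharP (ResidueField S) p

theorem isAdicComplete_maximalIdeal_quotient {A : Type*} [CommRing A] [IsNoetherianRing A]
    [IsLocalRing A] [IsAdicComplete (maximalIdeal A) A] (q : Ideal A) [IsLocalRing (A ⧸ q)] :
    IsAdicComplete (maximalIdeal (A ⧸ q)) (A ⧸ q) := by
  rw [← map_maximalIdeal_of_surjective _ (Ideal.Quotient.mk_surjective (I := q))]
  exact isAdicComplete_map_quotient q

theorem bijective_residueField_map_of_surjective {A B : Type*} [CommRing A] [CommRing B]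
    [IsLocalRing A] [IsLocalRing B] {f : A →+* B} [IsLocalHom f] (hf : Function.Surjective f) :
    Function.Bijective (ResidueField.map f) :=
  ⟨RingHom.injective _, .of_comp (g := residue A) (residue_surjective.comp hf)⟩

theorem exists_isProPDomain_ringKrullDim_eq (p : ℕ) (L : Type u) [CommRing L] [IsDomain L]
    [IsNoetherianRing L] [IsLocalRing L] [Finite (ResidueField L)] [CharP (ResidueField L) p] :
    ∃ (S : Type u) (_ : CommRing S) (f : L →+* S),
      IsProPDomain p S ∧ Function.Injective f ∧ ringKrullDim S = ringKrullDim L := by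
  let A := AdicCompletion (maximalIdeal L) L
  obtain ⟨q, hq, hdim⟩ := exists_mem_minimalPrimes_ringKrullDim_quotient_eq A
  have : q.IsPrime := hq.1.1
  have : IsLocalRing (A ⧸ q) := .of_surjective' _ Ideal.Quotient.mk_surjective
  have : IsLocalHom (Ideal.Quotient.mk q) := .of_surjective _ Ideal.Quotient.mk_surjective
  let r : ResidueField L →+* ResidueField (A ⧸ q) :=
    (ResidueField.map (Ideal.Quotient.mk q)).comp (ResidueField.map (algebraMap L A))
  have hr : Function.Surjective r :=
    (bijective_residueField_map_of_surjective Ideal.Quotient.mk_surjective).2.comp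
      (AdicCompletion.residueField_map_bijective L).2
  exact ⟨A ⧸ q, _, algebraMap L (A ⧸ q),
    { isAdicComplete := isAdicComplete_maximalIdeal_quotient q
      finite_residueField := .of_surjective r hr
      charP_residueField := charP_of_injective_ringHom r.injective p },
    injective_algebraMap_quotient_of_mem_minimalPrimes hq,
    hdim.trans (ringKrullDim_adicCompletion_maximalIdeal L)⟩

theorem ringKrullDim_powerSeries_s5 (L : Type*) [CommRing L] [IsNoetherianRing L] :
    ringKrullDim (PowerSeries L) = ringKrullDim L + 1 := by
  have hreg : IsSMulRegular (PowerSeries L) (PowerSeries.X : PowerSeries L) :=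
    Module.Flat.isSMulRegular_of_nonZeroDivisors MvPowerSeries.X_mem_nonzeroDivisors
  have hjac : (PowerSeries.X : PowerSeries L) ∈ Ring.jacobson (PowerSeries L) := by
    rw [← Ideal.jacobson_bot, Ideal.mem_jacobson_bot]
    exact fun f ↦ PowerSeries.isUnit_iff_constantCoeff.mpr (by simp)
  have hker : RingHom.ker (PowerSeries.constantCoeff (R := L)) = Ideal.span {PowerSeries.X} := by
    ext f
    rw [RingHom.mem_ker, Ideal.mem_span_singleton, PowerSeries.X_dvd_iff]
  rw [← ringKrullDim_quotient_span_singleton_succ_eq_ringKrullDim_of_mem_jacobson hreg hjac, ← hker,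
    ringKrullDim_eq_of_ringEquiv
      (RingHom.quotientKerEquivOfSurjective PowerSeries.constantCoeff_surj)]

theorem ringKrullDim_mvPowerSeries (L : Type*) [CommRing L] [IsNoetherianRing L] (e : ℕ) :
    ringKrullDim (MvPowerSeries (Fin e) L) = ringKrullDim L + e := by
  induction e with
  | zero =>
    rw [ringKrullDim_eq_of_ringEquiv (MvPowerSeries.isEmptyEquiv (Fin 0) L).toRingEquiv,
      Nat.cast_zero, add_zero]
  | succ e ih =>
    rw [ringKrullDim_eq_of_ringEquiv (MvPowerSeries.finSuccEquiv L e).toRingEquiv,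
      ringKrullDim_powerSeries_s5, ih, Nat.cast_succ, add_assoc]

theorem exists_isProPDomain_ringKrullDim_eq_add (p : ℕ) (L : Type u) [CommRing L] [IsDomain L]
    [IsNoetherianRing L] [IsLocalRing L] [Finite (ResidueField L)] [CharP (ResidueField L) p]
    (e : ℕ) : ∃ (S : Type u) (_ : CommRing S) (f : L →+* S),
      IsProPDomain p S ∧ Function.Injective f ∧ ringKrullDim S = ringKrullDim L + e := by
  let M := MvPowerSeries (Fin e) L
  have : IsDomain M := NoZeroDivisors.to_isDomain M
  let c : M →+* L := MvPowerSeries.constantCoeff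
  have hc : Function.Surjective c := fun x ↦
    ⟨MvPowerSeries.C x, MvPowerSeries.constantCoeff_C x⟩
  have : IsLocalHom c := .of_surjective c hc
  have hres := (bijective_residueField_map_of_surjective hc).1
  have : Finite (ResidueField M) := .of_injective _ hres
  have : CharP (ResidueField M) p := RingHom.charP _ hres p
  obtain ⟨S, _, f, hS, hf, hdim⟩ := exists_isProPDomain_ringKrullDim_eq p M
  exact ⟨S, _, f.comp MvPowerSeries.C, hS, hf.comp MvPowerSeries.C_injective,
    hdim.trans (ringKrullDim_mvPowerSeries L e)⟩

end ProPDomain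

section Domination

open IsLocalRing

theorem exists_isMaximal_liesOver_maximalIdeal {R B T : Type*} [CommRing R] [IsLocalRing R]
    [CommRing B] [Algebra R B] [CommRing T] [IsLocalRing T] (g : B →+* T)
    [IsLocalHom (g.comp (algebraMap R B))] :
    ∃ Q : Ideal B, Q.IsMaximal ∧ Q.LiesOver (maximalIdeal R) := by
  obtain ⟨Q, hQ, hle⟩ :=
    ((maximalIdeal T).comap g).exists_le_maximal (Ideal.comap_ne_top g Ideal.IsPrime.ne_top')
  refine ⟨Q, hQ, ⟨(maximalIdeal.isMaximal R).eq_of_le Ideal.IsPrime.ne_top' ?_⟩⟩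
  rw [← maximalIdeal_comap (g.comp (algebraMap R B)), ← Ideal.comap_comap]
  exact Ideal.comap_mono hle

theorem finite_quotient_of_liesOver {A B : Type*} [CommRing A] [CommRing B] [Algebra A B]
    [Algebra.FiniteType A B] (P : Ideal A) [P.IsMaximal] [Finite (A ⧸ P)] (Q : Ideal B)
    [Q.IsMaximal] [Q.LiesOver P] : Finite (B ⧸ Q) := by
  let _ : Field (A ⧸ P) := Ideal.Quotient.field P
  let _ : Field (B ⧸ Q) := Ideal.Quotient.field Q
  have : Algebra.FiniteType (A ⧸ P) (B ⧸ Q) := .of_restrictScalars_finiteType A _ _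
  have : Module.Finite (A ⧸ P) (B ⧸ Q) := finite_of_finite_type_of_isJacobsonRing _ _
  exact Module.finite_of_finite (A ⧸ P)

theorem exists_ringKrullDim_add_natCast_eq {L R : Type*} [CommRing L] [IsLocalRing L] [CommRing R]
    [IsNoetherianRing R] [IsLocalRing R] (h : ringKrullDim L ≤ ringKrullDim R) :
    ∃ e : ℕ, ringKrullDim L + e = ringKrullDim R := by
  simp only [← maximalIdeal_height_eq_ringKrullDim] at h ⊢
  obtain ⟨c, hc⟩ := exists_add_of_le (WithBot.coe_le_coe.mp h)
  have hfin : (maximalIdeal R).height ≠ ⊤ := Ideal.height_ne_top_of_isPrime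
  rw [hc] at hfin ⊢
  lift c to ℕ using fun htop ↦ hfin (by rw [htop, add_top])
  exact ⟨c, rfl⟩

theorem exists_isProPDomain_of_fg_of_liesOver (p : ℕ) {R : Type*} {C : Type u} [CommRing R]
    [IsNoetherianRing R] [IsLocalRing R] [Finite (ResidueField R)] [CharP (ResidueField R) p]
    [CommRing C] [IsDomain C] [Algebra R C] [FaithfulSMul R C] [Algebra.IsAlgebraic R C]
    {B : Subalgebra R C} (hB : B.FG) (Q : Ideal B) [Q.IsMaximal] [Q.LiesOver (maximalIdeal R)] :
    ∃ (S : Type u) (_ : CommRing S) (f : B →+* S),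
      IsProPDomain p S ∧ Function.Injective f ∧ ringKrullDim S = ringKrullDim R := by
  have : Algebra.FiniteType R B := B.fg_iff_finiteType.mp hB
  have : IsNoetherianRing B := isNoetherianRing_of_fg hB
  have : Finite (R ⧸ maximalIdeal R) := ‹Finite (ResidueField R)›
  have : Finite (B ⧸ Q) := finite_quotient_of_liesOver (maximalIdeal R) Q
  let L := Localization.AtPrime Q
  have : IsDomain L := IsLocalization.isDomain_of_atPrime L Q
  have : IsNoetherianRing L := IsLocalization.isNoetherianRing Q.primeCompl L ‹_›
  have : Finite (ResidueField L) := inferInstanceAs (Finite Q.ResidueField)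
  let r : ResidueField R →+* ResidueField L :=
    (algebraMap (B ⧸ Q) Q.ResidueField).comp (algebraMap (R ⧸ maximalIdeal R) (B ⧸ Q))
  have : CharP (ResidueField L) p := charP_of_injective_ringHom r.injective p
  have hdim : ringKrullDim L ≤ ringKrullDim R := by
    have h := height_le_height_under_of_fg hB Q
    rw [← Q.over_def (maximalIdeal R)] at h
    rw [IsLocalization.AtPrime.ringKrullDim_eq_height Q L, ← maximalIdeal_height_eq_ringKrullDim]
    exact_mod_cast h
  obtain ⟨e, he⟩ := exists_ringKrullDim_add_natCast_eq hdim
  obtain ⟨S, _, f, hS, hf, hSdim⟩ := exists_isProPDomain_ringKrullDim_eq_add p L e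
  exact ⟨S, _, f.comp (algebraMap B L), hS,
    hf.comp (IsLocalization.injective L Q.primeCompl_le_nonZeroDivisors), hSdim.trans he⟩

theorem exists_valuationSubring_forall_exists_liesOver (R K : Type*) [CommRing R] [IsLocalRing R]
    [Field K] [Algebra R K] :
    ∃ V : ValuationSubring K, (∀ r : R, algebraMap R K r ∈ V) ∧
      ∀ B : Subalgebra R K, (∀ x ∈ B, x ∈ V) →
        ∃ Q : Ideal B, Q.IsMaximal ∧ Q.LiesOver (maximalIdeal R) := by
  obtain ⟨V, hV, _⟩ := exists_factor_valuationRing (algebraMap R K)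
  refine ⟨V, hV, fun B hB ↦ ?_⟩
  let g : B →+* V.toSubring := B.val.toRingHom.codRestrict V.toSubring fun x ↦ hB x x.2
  have : IsLocalRing V.toSubring := inferInstanceAs (IsLocalRing V)
  have : IsLocalHom (g.comp (algebraMap R B)) := ‹_›
  exact exists_isMaximal_liesOver_maximalIdeal g

theorem ringChar_eq_of_injective {R S : Type*} [Ring R] [Ring S] {f : R →+* S}
    (hf : Function.Injective f) : ringChar S = ringChar R :=
  have : CharP S (ringChar R) := charP_of_injective_ringHom hf (ringChar R)
  ringChar.eq_iff.mpr this

theorem exists_isProPDomain_injective_end_to_matrix (p : ℕ) (R : Type u) (W : Type*)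
    [CommRing R] [IsDomain R] [IsNoetherianRing R] [IsLocalRing R] [Finite (ResidueField R)]
    [CharP (ResidueField R) p] [AddCommGroup W] [Module R W] [Module.Finite R W]
    [Module.IsTorsionFree R W] :
    ∃ (S : Type u) (_ : CommRing S), IsProPDomain p S ∧ ringChar S = ringChar R ∧
      ringKrullDim S = ringKrullDim R ∧
      ∃ (n : ℕ) (ρ : Module.End R W →+* Matrix (Fin n) (Fin n) S), Function.Injective ρ := by
  obtain ⟨V, hV, hQ⟩ := exists_valuationSubring_forall_exists_liesOver R (FractionRing R)
  obtain ⟨n, B, hB, hBV, ρ, hρ⟩ := exists_injective_end_to_matrix (W := W) hV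
  obtain ⟨Q, _, _⟩ := hQ B hBV
  have := IsLocalization.isAlgebraic (FractionRing R) (nonZeroDivisors R)
  obtain ⟨S, _, f, hS, hf, hdim⟩ := exists_isProPDomain_of_fg_of_liesOver p hB Q
  have hRS : Function.Injective (f.comp (algebraMap R B)) :=
    hf.comp (FaithfulSMul.algebraMap_injective R B)
  exact ⟨S, _, hS, ringChar_eq_of_injective hRS, hdim, n,
    f.mapMatrix.comp ρ.toRingHom, (Matrix.map_injective hf).comp hρ⟩

end Domination

theorem exists_linearisation_of_subgroup_aut_torsionFree_general (p : ℕ)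
    (R : Type) [CommRing R] [IsDomain R] [IsNoetherianRing R] [IsLocalRing R]
    [Finite (IsLocalRing.ResidueField R)] [CharP (IsLocalRing.ResidueField R) p]
    (W : Type) [AddCommGroup W] [Module R W] [Module.Finite R W]
    (hW : ∀ r : R, r ≠ 0 → Function.Injective fun w : W => r • w)
    (G : Subgroup (LinearMap.GeneralLinearGroup R W)) :
    Nonempty (LinearisationOverProPDomain p R G) := by
  have : Module.IsTorsionFree R W := ⟨fun r hr ↦ hW r hr.ne_zero⟩
  obtain ⟨S, _, hS, hchar, hdim, n, ρ, hρ⟩ :=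
    exists_isProPDomain_injective_end_to_matrix p R W
  exact ⟨{
    S := S
    isDomain := hS.toIsDomain
    isNoetherianRing := hS.toIsNoetherian
    isLocalRing := hS.toIsLocalRing
    isAdicComplete := hS.isAdicComplete
    finiteResidueField := hS.finite_residueField
    charPResidueField := hS.charP_residueField
    char_eq := hchar
    dim_eq := hdim
    n := n
    f := (Units.map ρ.toMonoidHom).comp G.subtype
    injective := (Units.map_injective hρ).comp G.subtype_injective }⟩

/-- Let `R` be a commutative Noetherian local pro-`p` domain, `W` a
finitely generated torsion-free `R`-module and `G ≤ Aut_R(W)`. Then `G` embeds into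
`GL_n(S)` for some commutative Noetherian local pro-`p` domain `S` with the same
characteristic and Krull dimension as `R`. -/
theorem exists_linearisation_of_subgroup_aut_torsionFree (p : ℕ) [Fact p.Prime]
    (R : Type) [CommRing R] [IsDomain R] [IsNoetherianRing R] [IsLocalRing R]
    [IsAdicComplete (IsLocalRing.maximalIdeal R) R]
    [Finite (IsLocalRing.ResidueField R)] [CharP (IsLocalRing.ResidueField R) p]
    (W : Type) [AddCommGroup W] [Module R W] [Module.Finite R W]
    (hW : ∀ r : R, r ≠ 0 → Function.Injective fun w : W => r • w)
    (G : Subgroup (LinearMap.GeneralLinearGroup R W)) :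
    Nonempty (LinearisationOverProPDomain p R G) :=
  exists_linearisation_of_subgroup_aut_torsionFree_general p R W hW G
end
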